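/- arXiv:0906.5491 — 6 statements merged into one kernel-verified Lean document; each statement's English description precedes it below -/
import Mathlib

section
/- Let G = ⟨x, y | x y² x⁻¹ = y³⟩ and z = y⁴. Then the relation module M(G,{x,z}) cannot be generated by a single element as a ℤG-module. -/
/-- The single relator `x y² x⁻¹ y⁻³` in the free group on two generators. -/
def bsRels : Set (FreeGroup (Fin 2)) :=
  {FreeGroup.of 0 * FreeGroup.of 1 ^ 2 * (FreeGroup.of 0)⁻¹ * (FreeGroup.of 1 ^ 3)⁻¹}

/-- The Baumslag–Solitar group `G = ⟨x, y | x y² x⁻¹ = y³⟩`. -/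
abbrev BSGroup := PresentedGroup bsRels

/-- `x ∈ G`. -/
def bsX : BSGroup := PresentedGroup.of 0

/-- `y ∈ G`. -/
def bsY : BSGroup := PresentedGroup.of 1

/-- The epimorphism `F(a,b) → G`, `a ↦ x`, `b ↦ z = y⁴`. -/
def bsPi : FreeGroup (Fin 2) →* BSGroup :=
  FreeGroup.lift (fun i => if i = 0 then bsX else bsY ^ 4)

/-!
Let `A` be the ring `ℤ[ℚ]` of polynomials in the rational powers of `y`, and map `G` to the skew
Laurent polynomial ring `S = A[X, X⁻¹]` in which `X y ^ q = y ^ (3 q / 2) X`. The Fox derivative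
`∂/∂a`, pushed forward to `S`, is `ℤG`-linear on the relation module, so if one relation `s`
generated it then `∂r/∂a ∈ S ∂s/∂a` for every relation `r`.

* Both `y² = [x, z]` and `z = y⁴` are words in the generators, and their commutator is a relation
  whose derivative `(1 - y⁴) (1 - y⁶)` is nonzero and homogeneous in `X`. As `A` is a domain, the
  factor `∂s/∂a` must be a monomial.
* The fundamental formula of Fox calculus puts `∂s/∂a (X - 1)` in `S (z - 1)`. Comparing
  coefficients for the monomial `∂s/∂a` shows that `X (y⁴ - 1) X⁻¹ = y⁶ - 1` divides the
  degree-zero coefficient of `∂r/∂a` for every relation `r`.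
* The words `u = [a, b]` and `w = [a, u]` represent `y²` and `y`. The degree-zero coefficient of
  `∂(w² u⁻¹)/∂a` takes the value `(1 + ζ) (1 - ζ³) ≠ 0` at a primitive sixth root of unity `y = ζ`,
  where `y⁶ - 1` vanishes.
-/

open scoped commutatorElement

/-- Left multiplication by units, as automorphisms of the additive group of `S` written
multiplicatively. -/
def unitsMulAut (S : Type*) [Ring S] : Sˣ →* MulAut (Multiplicative S) :=
  (MulAutMultiplicative S).symm.toMonoidHom.comp (DistribMulAction.toAddAut Sˣ S)

theorem unitsMulAut_apply {S : Type*} [Ring S] (u : Sˣ) (s : S) :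
    unitsMulAut S u (.ofAdd s) = .ofAdd (u * s) :=
  rfl

section FoxDerivative

variable {α S : Type*} [DecidableEq α] [Ring S] (φ : FreeGroup α →* S) (i : α)

/-- The section of `S ⋊ F → F` that takes the generator `xⱼ` to `(δᵢⱼ, xⱼ)`. -/
def foxSection :
    FreeGroup α →* Multiplicative S ⋊[(unitsMulAut S).comp φ.toHomUnits] FreeGroup α :=
  FreeGroup.lift fun j ↦ ⟨.ofAdd (Pi.single (M := fun _ ↦ S) i 1 j), .of j⟩

theorem foxSection_right (f : FreeGroup α) : (foxSection φ i f).right = f := by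
  have right_comp : SemidirectProduct.rightHom.comp (foxSection φ i) = MonoidHom.id _ := by
    ext j
    simp [foxSection]
  exact DFunLike.congr_fun right_comp f

/-- The Fox derivative `∂/∂xᵢ` on the free group, pushed forward along `φ` into the ring `S`. It is
encoded as a component of a homomorphism to `S ⋊ F`, where the product rule is multiplication. -/
def foxDeriv (f : FreeGroup α) : S :=
  (foxSection φ i f).left.toAdd

theorem foxDeriv_of (j : α) : foxDeriv φ i (.of j) = Pi.single (M := fun _ ↦ S) i 1 j := by
  simp [foxDeriv, foxSection]

theorem foxDeriv_one : foxDeriv φ i 1 = 0 := by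
  simp [foxDeriv]

theorem foxDeriv_mul (f g : FreeGroup α) :
    foxDeriv φ i (f * g) = foxDeriv φ i f + φ f * foxDeriv φ i g := by
  rw [foxDeriv, map_mul, SemidirectProduct.mul_left, foxSection_right]
  rfl

theorem foxDeriv_inv (f : FreeGroup α) : foxDeriv φ i f⁻¹ = -(φ f⁻¹ * foxDeriv φ i f) := by
  rw [eq_neg_iff_add_eq_zero, ← foxDeriv_mul, inv_mul_cancel, foxDeriv_one]

theorem foxDeriv_mul_inv (f g : FreeGroup α) :
    foxDeriv φ i (f * g⁻¹) = foxDeriv φ i f - φ (f * g⁻¹) * foxDeriv φ i g := by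
  rw [foxDeriv_mul, foxDeriv_inv, map_mul, mul_neg, ← mul_assoc, sub_eq_add_neg]

theorem foxDeriv_commutator (f g : FreeGroup α) :
    foxDeriv φ i ⁅f, g⁆ =
      (1 - φ (f * g * f⁻¹)) * foxDeriv φ i f + (φ f - φ ⁅f, g⁆) * foxDeriv φ i g := by
  simp only [commutatorElement_def, foxDeriv_mul, foxDeriv_inv, map_mul]
  noncomm_ring

theorem sum_foxDeriv_mul_sub_one [Fintype α] (f : FreeGroup α) :
    ∑ j, foxDeriv φ j f * (φ (.of j) - 1) = φ f - 1 := by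
  induction f using FreeGroup.induction_on with
  | C1 => simp [foxDeriv_one]
  | of j => simp [foxDeriv_of, Pi.single_apply]
  | inv_of j ih =>
    simp only [foxDeriv_inv, neg_mul, mul_assoc, Finset.sum_neg_distrib, ← Finset.mul_sum, ih]
    rw [mul_sub, ← map_mul, inv_mul_cancel, map_one, mul_one, neg_sub]
  | mul f g ihf ihg =>
    simp only [foxDeriv_mul, add_mul, Finset.sum_add_distrib, mul_assoc, ← Finset.mul_sum, ihf, ihg,
      map_mul]
    noncomm_ring

end FoxDerivative

section RelationModule

variable {α G S : Type*} [DecidableEq α] [Group G] [Ring S] (π : FreeGroup α →* G) (ρ : G →* S)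
  (i : α)

theorem exists_ofMul_abelianization_of_eq {H : Type*} [Group H] (t : Additive (Abelianization H)) :
    ∃ r : H, Additive.ofMul (Abelianization.of r) = t :=
  QuotientGroup.mk_surjective t.toMul

/-- The map induced by the Fox derivative `∂/∂xᵢ` on the relation module of `π`: a component of
the Magnus embedding, pushed forward along `ρ`. -/
def relationDeriv : Additive (Abelianization π.ker) →+ S :=
  MonoidHom.toAdditiveLeft <| Abelianization.lift
    { toFun := fun r ↦ .ofAdd (foxDeriv (ρ.comp π) i r)
      map_one' := by simp [foxDeriv_one]
      map_mul' := fun r s ↦ by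
        have hr : π r = 1 := r.2
        simp [foxDeriv_mul, hr] }

theorem relationDeriv_of (r : π.ker) :
    relationDeriv π ρ i (.ofMul (.of r)) = foxDeriv (ρ.comp π) i r := by
  simp [relationDeriv]

theorem foxDeriv_conj_of_mem_ker (f : FreeGroup α) {r : FreeGroup α} (hr : r ∈ π.ker) :
    foxDeriv (ρ.comp π) i (f * r * f⁻¹) = ρ (π f) * foxDeriv (ρ.comp π) i r := by
  have hr : π r = 1 := hr
  have map_inv_cancel : ρ (π f) * ρ (π f)⁻¹ = 1 := by rw [← map_mul, mul_inv_cancel, map_one]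
  simp [foxDeriv_mul, foxDeriv_inv, hr, ← mul_assoc, map_inv_cancel]

variable [Module (MonoidAlgebra ℤ G) (Additive (Abelianization π.ker))] {π}

theorem relationDeriv_smul (hπ : Function.Surjective π)
    (hact : ∀ (f : FreeGroup α) (r r' : π.ker), (r' : FreeGroup α) = f * r * f⁻¹ →
      MonoidAlgebra.of ℤ G (π f) • Additive.ofMul (Abelianization.of r) =
        Additive.ofMul (Abelianization.of r'))
    (c : MonoidAlgebra ℤ G) (t : Additive (Abelianization π.ker)) :
    relationDeriv π ρ i (c • t) = MonoidAlgebra.lift ℤ S G ρ c * relationDeriv π ρ i t := by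
  induction c using MonoidAlgebra.induction_on with
  | of g =>
    obtain ⟨f, rfl⟩ := hπ g
    obtain ⟨r, rfl⟩ := exists_ofMul_abelianization_of_eq t
    rw [hact f r ⟨f * r * f⁻¹, π.normal_ker.conj_mem r r.2 f⟩ rfl, relationDeriv_of,
      relationDeriv_of, foxDeriv_conj_of_mem_ker π ρ i f r.2, MonoidAlgebra.lift_of]
  | add c c' hc hc' => rw [add_smul, map_add, map_add, add_mul, hc, hc']
  | smul n c hc => rw [smul_assoc, map_zsmul, map_zsmul, hc, smul_mul_assoc]

theorem exists_foxDeriv_eq_mul_of_span_eq_top (hπ : Function.Surjective π)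
    (hact : ∀ (f : FreeGroup α) (r r' : π.ker), (r' : FreeGroup α) = f * r * f⁻¹ →
      MonoidAlgebra.of ℤ G (π f) • Additive.ofMul (Abelianization.of r) =
        Additive.ofMul (Abelianization.of r'))
    {s : π.ker}
    (hs : Submodule.span (MonoidAlgebra ℤ G) {Additive.ofMul (Abelianization.of s)} = ⊤)
    (r : π.ker) :
    ∃ h, foxDeriv (ρ.comp π) i r = h * foxDeriv (ρ.comp π) i s := by
  obtain ⟨c, hc⟩ := Submodule.mem_span_singleton.1 <|
    hs ▸ Submodule.mem_top (x := Additive.ofMul (Abelianization.of r))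
  refine ⟨MonoidAlgebra.lift ℤ S G ρ c, ?_⟩
  rw [← relationDeriv_of, ← relationDeriv_of, ← hc, relationDeriv_smul ρ i hπ hact]

end RelationModule

section SkewGroupRing

open SkewMonoidAlgebra Finset

variable {k H : Type*}

theorem skew_coeff_mul_mul_of_uniqueMul [Semiring k] [Mul H] [SMulZeroClass H k]
    {f v : SkewMonoidAlgebra k H} {a b : H} (hab : UniqueMul f.support v.support a b) :
    (f * v).coeff (a * b) = f.coeff a * a • v.coeff b := by
  classical
  simp_rw [coeff_mul, sum_def', ← Finset.sum_product']
  refine (Finset.sum_eq_single (a, b) ?_ ?_).trans (if_pos rfl) <;> simp_rw [Finset.mem_product]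
  · exact fun p hp hne ↦ if_neg fun he ↦
      hne (Prod.ext (hab hp.1 hp.2 he).1 (hab hp.1 hp.2 he).2)
  · intro hnotMem
    rcases not_and_or.1 hnotMem with ha | hb
    · simp [notMem_support_iff.1 ha]
    · simp [notMem_support_iff.1 hb]

theorem exists_eq_single_of_mul_eq_single [Semiring k] [NoZeroDivisors k] [Group H]
    [TwoUniqueProds H] [MulSemiringAction H k] {f v : SkewMonoidAlgebra k H} {g : H} {c : k}
    (hc : c ≠ 0) (hfv : f * v = single g c) : ∃ g' c', v = single g' c' := by
  have hfv0 : f * v ≠ 0 := by rwa [hfv, Ne, single_eq_zero]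
  have hf : 0 < #f.support := card_pos.2 <| nonempty_iff_ne_empty.2 fun h ↦
    hfv0 (by rw [support_eq_empty.1 h, zero_mul])
  have eq_of_uniqueMul {a b : H} (ha : a ∈ f.support) (hb : b ∈ v.support)
      (hab : UniqueMul f.support v.support a b) : a * b = g := by
    have hne : (f * v).coeff (a * b) ≠ 0 := by
      rw [skew_coeff_mul_mul_of_uniqueMul hab]
      exact mul_ne_zero (mem_support_iff.1 ha) ((smul_ne_zero_iff_ne a).2 (mem_support_iff.1 hb))
    rw [hfv, coeff_single] at hne
    by_contra hab
    exact hne (Finsupp.single_eq_of_ne hab)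
  have hv : #v.support ≤ 1 := by
    by_contra! hv
    obtain ⟨p, hp, q, hq, hpq, hp_unique, hq_unique⟩ :=
      TwoUniqueProds.uniqueMul_of_one_lt_card (A := f.support) (B := v.support)
        (hv.trans_le (Nat.le_mul_of_pos_left _ hf))
    rw [mem_product] at hp hq
    have hpg := eq_of_uniqueMul hp.1 hp.2 hp_unique
    have hqg := eq_of_uniqueMul hq.1 hq.2 hq_unique
    obtain ⟨h₁, h₂⟩ := hp_unique hq.1 hq.2 (hqg.trans hpg.symm)
    exact hpq (Prod.ext h₁.symm h₂.symm)
  obtain ⟨g', c', hv⟩ := Finsupp.card_support_le_one'.1 hv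
  exact ⟨g', c', coeff_injective hv⟩

theorem smul_dvd_coeff_one_of_single_mul_sub_one [CommRing k] [Group H] [MulSemiringAction H k]
    {g t : H} (ht : t ≠ 1) {c u : k} {s : SkewMonoidAlgebra k H}
    (hs : single g c * (single t 1 - 1) = s * single 1 u) (h : SkewMonoidAlgebra k H) :
    t • u ∣ (h * single g c).coeff 1 := by
  have hc : c = s.coeff (g * t) * (g * t) • u := by
    have := congrArg (fun p ↦ p.coeff (g * t)) hs
    simpa [mul_sub, Finsupp.single_apply, ht] using this
  rw [coeff_mul_single, hc]
  simpa only [one_mul, smul_mul', smul_smul, inv_mul_cancel_left] using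
    Dvd.intro_left (h.coeff g⁻¹ * g⁻¹ • s.coeff (g * t)) (mul_assoc _ _ _)

end SkewGroupRing

section RationalPowers

open Multiplicative

/-- The group ring `ℤ[ℚ]`, thought of as the ring of polynomials in the rational powers of `y`. -/
abbrev RatPowers := MonoidAlgebra ℤ (Multiplicative ℚ)

/-- The element `y = y¹` of `RatPowers`. -/
noncomputable def ratY : RatPowers := MonoidAlgebra.of ℤ _ (ofAdd 1)

/-- The generator of the infinite cyclic group acts on `RatPowers` by `y ^ q ↦ y ^ (3 / 2 * q)`. -/
noncomputable instance ratPowersAction : MulSemiringAction (Multiplicative ℤ) RatPowers :=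
  MulSemiringAction.compHom RatPowers <| (MonoidAlgebra.domCongrAut (R := ℤ) (A := ℤ)).comp <|
    (unitsMulAut ℚ).comp <| zpowersHom ℚˣ (Units.mk0 (3 / 2) (by norm_num))

theorem ofAdd_one_smul_ratY_pow (k : ℕ) : ofAdd (1 : ℤ) • ratY ^ (2 * k) = ratY ^ (3 * k) := by
  have smul_of (q : ℚ) : ofAdd (1 : ℤ) • MonoidAlgebra.of ℤ _ (ofAdd q) =
      MonoidAlgebra.of ℤ _ (ofAdd (3 / 2 * q)) := by
    change MonoidAlgebra.domCongr ℤ ℤ _ _ = _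
    simp [unitsMulAut_apply]
  have ratY_pow (n : ℕ) : ratY ^ n = MonoidAlgebra.of ℤ _ (ofAdd (n : ℚ)) := by
    rw [ratY, ← map_pow, ← ofAdd_nsmul, nsmul_one]
  rw [ratY_pow, smul_of, ratY_pow]
  congr 2
  push_cast
  ring

theorem exists_ringHom_isPrimitiveRoot_ratY {n : ℕ} (hn : n ≠ 0) :
    ∃ χ : RatPowers →+* ℂ, IsPrimitiveRoot (χ ratY) n := by
  let e : Multiplicative ℚ →* ℂ :=
    { toFun := fun q ↦ Complex.exp (2 * Real.pi * Complex.I / n * (q.toAdd : ℚ))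
      map_one' := by simp
      map_mul' := fun p q ↦ by simp [mul_add, Complex.exp_add] }
  refine ⟨MonoidAlgebra.lift ℤ ℂ _ e, ?_⟩
  simpa [ratY, e] using Complex.isPrimitiveRoot_exp n hn

theorem ratY_pow_ne_one {n : ℕ} (hn : n ≠ 0) : ratY ^ n ≠ 1 := by
  obtain ⟨χ, hχ⟩ := exists_ringHom_isPrimitiveRoot_ratY n.succ_ne_zero
  intro h
  exact hχ.pow_ne_one_of_pos_of_lt hn n.lt_succ_self (by rw [← map_pow, h, map_one])

end RationalPowers

namespace BSGroup

open Multiplicative SkewMonoidAlgebra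

theorem bsX_mul_bsY_pow_mul_inv (k : ℕ) : bsX * bsY ^ (2 * k) * bsX⁻¹ = bsY ^ (3 * k) := by
  have rel : bsX * bsY ^ 2 * bsX⁻¹ = bsY ^ 3 :=
    mul_inv_eq_one.1 (PresentedGroup.one_of_mem (rels := bsRels) rfl)
  rw [pow_mul, pow_mul, ← rel, conj_pow]

theorem commutator_bsX_bsY_pow (k : ℕ) : ⁅bsX, bsY ^ (2 * k)⁆ = bsY ^ k := by
  rw [commutatorElement_def, bsX_mul_bsY_pow_mul_inv, mul_inv_eq_iff_eq_mul, ← pow_add]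
  congr 1
  ring

/-- The word `[a, b]`, which represents `y²`. -/
def wordYSq : FreeGroup (Fin 2) := ⁅FreeGroup.of (0 : Fin 2), FreeGroup.of 1⁆

/-- The word `[a, [a, b]]`, which represents `y`. -/
def wordY : FreeGroup (Fin 2) := ⁅FreeGroup.of (0 : Fin 2), wordYSq⁆

theorem bsPi_of_zero : bsPi (.of 0) = bsX := by simp [bsPi]

theorem bsPi_of_one : bsPi (.of 1) = bsY ^ 4 := by simp [bsPi]

theorem bsPi_wordYSq : bsPi wordYSq = bsY ^ 2 := by
  rw [wordYSq, map_commutatorElement, bsPi_of_zero, bsPi_of_one, commutator_bsX_bsY_pow 2]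

theorem bsPi_wordY : bsPi wordY = bsY := by
  rw [wordY, map_commutatorElement, bsPi_of_zero, bsPi_wordYSq, ← pow_one bsY, ← pow_mul,
    commutator_bsX_bsY_pow 1]

theorem bsPi_surjective : Function.Surjective bsPi := by
  rw [← MonoidHom.range_eq_top, eq_top_iff, ← PresentedGroup.closure_range_of, Subgroup.closure_le]
  rintro _ ⟨i, rfl⟩
  fin_cases i
  · exact ⟨_, bsPi_of_zero⟩
  · exact ⟨_, bsPi_wordY⟩

theorem commutator_wordYSq_of_one_mem_ker : ⁅wordYSq, FreeGroup.of 1⁆ ∈ bsPi.ker := by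
  rw [MonoidHom.mem_ker, map_commutatorElement, bsPi_wordYSq, bsPi_of_one]
  exact (Commute.pow_pow_self bsY 2 4).commutator_eq

theorem wordY_sq_mul_inv_mem_ker : wordY ^ 2 * wordYSq⁻¹ ∈ bsPi.ker := by
  rw [MonoidHom.mem_ker, map_mul, map_inv, map_pow, bsPi_wordY, bsPi_wordYSq, mul_inv_cancel]

/-- The skew Laurent polynomial ring over `RatPowers` in a variable `X` with `X y² = y³ X`. -/
abbrev BSSkewRing := SkewMonoidAlgebra RatPowers (Multiplicative ℤ)

/-- The inclusion of `RatPowers` into `BSSkewRing` as the polynomials of degree `0` in `X`. -/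
noncomputable abbrev ratC : RatPowers →+* BSSkewRing := singleOneRingHom

/-- The variable `X` of `BSSkewRing`. -/
noncomputable abbrev skewX : BSSkewRing := single (ofAdd 1) 1

theorem coeff_one_ratC (p : RatPowers) : (ratC p).coeff 1 = p :=
  coeff_single_apply.trans (if_pos rfl)

theorem coeff_one_ratC_mul (p : RatPowers) (f : BSSkewRing) :
    (ratC p * f).coeff 1 = p * f.coeff 1 :=
  coeff_single_one_mul ..

theorem skewX_mul_ratC (p : RatPowers) :
    skewX * ratC p = ratC (ofAdd (1 : ℤ) • p) * skewX := by
  change single _ _ * single _ _ = single _ _ * single _ _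
  simp

/-- The homomorphism `G → BSSkewRing` given by `x ↦ X` and `y ↦ y`. -/
noncomputable def bsRho : BSGroup →* BSSkewRing :=
  (Units.coeHom BSSkewRing).comp <| PresentedGroup.toGroup
    (f := fun i ↦ if i = 0 then (of RatPowers (Multiplicative ℤ)).toHomUnits (ofAdd 1) else
      (ratC.toMonoidHom.comp (MonoidAlgebra.of ℤ _)).toHomUnits (ofAdd 1)) <| by
    rintro _ rfl
    have skewX_mul_ratY_sq : skewX * ratC ratY ^ 2 = ratC ratY ^ 3 * skewX := by
      rw [← map_pow, skewX_mul_ratC, ofAdd_one_smul_ratY_pow 1, map_pow]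
    rw [map_mul, map_inv, mul_inv_eq_one, map_mul, map_inv, mul_inv_eq_iff_eq_mul]
    ext1
    simpa [ratY] using skewX_mul_ratY_sq

theorem bsRho_bsX : bsRho bsX = skewX := by
  simp [bsRho, bsX]

theorem bsRho_bsY : bsRho bsY = ratC ratY := by
  simp [bsRho, bsY, ratY]

theorem bsRho_bsY_pow (k : ℕ) : bsRho (bsY ^ k) = ratC (ratY ^ k) := by
  rw [map_pow, map_pow, bsRho_bsY]

local notation "∂a" => foxDeriv (bsRho.comp bsPi) (0 : Fin 2)

theorem exists_foxDeriv_mul_skewX_sub_one_eq {r : FreeGroup (Fin 2)} (hr : r ∈ bsPi.ker) :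
    ∃ s : BSSkewRing, ∂a r * (skewX - 1) = s * ratC (ratY ^ 4 - 1) := by
  have fundamental := sum_foxDeriv_mul_sub_one (bsRho.comp bsPi) r
  simp only [Fin.sum_univ_two, MonoidHom.comp_apply, MonoidHom.mem_ker.1 hr, map_one, sub_self,
    bsPi_of_zero, bsPi_of_one, bsRho_bsX, bsRho_bsY_pow] at fundamental
  refine ⟨-foxDeriv (bsRho.comp bsPi) 1 r, ?_⟩
  rw [map_sub, map_one ratC]
  exact (eq_neg_of_add_eq_zero_left fundamental).trans (neg_mul _ _).symm

theorem foxDeriv_of_zero : ∂a (.of 0) = 1 := by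
  simp [foxDeriv_of]

theorem foxDeriv_of_one : ∂a (.of 1) = 0 := by
  simp [foxDeriv_of]

theorem foxDeriv_wordYSq : ∂a wordYSq = ratC (1 - ratY ^ 6) := by
  have hconj : bsPi (.of 0 * .of 1 * (.of 0)⁻¹) = bsY ^ 6 := by
    simpa [bsPi_of_zero, bsPi_of_one] using bsX_mul_bsY_pow_mul_inv 2
  rw [wordYSq, foxDeriv_commutator, MonoidHom.comp_apply, hconj, bsRho_bsY_pow,
    foxDeriv_of_zero, foxDeriv_of_one, mul_zero, add_zero, mul_one, ← map_one ratC, ← map_sub]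

theorem foxDeriv_commutator_wordYSq_of_one :
    ∂a ⁅wordYSq, FreeGroup.of 1⁆ = ratC ((1 - ratY ^ 4) * (1 - ratY ^ 6)) := by
  have hconj : bsPi (wordYSq * .of 1 * wordYSq⁻¹) = bsY ^ 4 := by
    rw [map_mul, map_mul, map_inv, bsPi_wordYSq, bsPi_of_one]
    group
  rw [foxDeriv_commutator, MonoidHom.comp_apply, hconj, bsRho_bsY_pow,
    foxDeriv_wordYSq, foxDeriv_of_one, mul_zero, add_zero, ← map_one ratC, ← map_sub, ← map_mul]

theorem foxDeriv_wordY :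
    ∂a wordY = ratC (1 - ratY ^ 3) + (skewX - ratC ratY) * ratC (1 - ratY ^ 6) := by
  have hconj : bsPi (.of 0 * wordYSq * (.of 0)⁻¹) = bsY ^ 3 := by
    simpa [bsPi_of_zero, bsPi_wordYSq] using bsX_mul_bsY_pow_mul_inv 1
  rw [wordY, foxDeriv_commutator, ← wordY]
  simp only [MonoidHom.comp_apply, hconj, bsPi_wordY, bsPi_of_zero, bsRho_bsX, bsRho_bsY_pow,
    bsRho_bsY]
  rw [foxDeriv_of_zero, foxDeriv_wordYSq, mul_one, ← map_one ratC, ← map_sub]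

theorem coeff_one_foxDeriv_wordY :
    (∂a wordY).coeff 1 = 1 - ratY ^ 3 - ratY * (1 - ratY ^ 6) := by
  have coeff_one_skewX_mul (p : RatPowers) : (skewX * ratC p).coeff 1 = 0 := by
    rw [skewX_mul_ratC, coeff_one_ratC_mul]
    simp
  rw [foxDeriv_wordY, sub_mul, coeff_add, coeff_sub, Finsupp.add_apply, Finsupp.sub_apply,
    coeff_one_skewX_mul, coeff_one_ratC_mul, coeff_one_ratC, coeff_one_ratC, zero_sub,
    ← sub_eq_add_neg]

theorem coeff_one_foxDeriv_wordY_sq_mul_inv :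
    (∂a (wordY ^ 2 * wordYSq⁻¹)).coeff 1 =
      (1 + ratY) * (1 - ratY ^ 3 - ratY * (1 - ratY ^ 6)) - (1 - ratY ^ 6) := by
  have hmul : ∂a (wordY ^ 2 * wordYSq⁻¹) = ratC (1 + ratY) * ∂a wordY - ∂a wordYSq := by
    rw [foxDeriv_mul_inv, MonoidHom.comp_apply, MonoidHom.mem_ker.1 wordY_sq_mul_inv_mem_ker,
      map_one, one_mul, pow_two, foxDeriv_mul, MonoidHom.comp_apply, bsPi_wordY, bsRho_bsY,
      map_add, map_one ratC, add_mul, one_mul]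
  rw [hmul, coeff_sub, Finsupp.sub_apply, coeff_one_ratC_mul, coeff_one_foxDeriv_wordY,
    foxDeriv_wordYSq, coeff_one_ratC]

theorem not_dvd_coeff_one_foxDeriv_wordY_sq_mul_inv :
    ¬ ratY ^ 6 - 1 ∣ (∂a (wordY ^ 2 * wordYSq⁻¹)).coeff 1 := by
  obtain ⟨χ, hχ⟩ := exists_ringHom_isPrimitiveRoot_ratY (n := 6) (by norm_num)
  rintro ⟨s, hs⟩
  have hmul : (1 + χ ratY) * (1 - χ ratY ^ 3) = 0 := by
    have h := congrArg χ (coeff_one_foxDeriv_wordY_sq_mul_inv.symm.trans hs)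
    simpa [hχ.pow_eq_one] using h
  rcases mul_eq_zero.1 hmul with h | h
  · exact hχ.pow_ne_one_of_pos_of_lt (l := 2) (by norm_num) (by norm_num)
      (by linear_combination (χ ratY - 1) * h)
  · exact hχ.pow_ne_one_of_pos_of_lt (l := 3) (by norm_num) (by norm_num) (sub_eq_zero.1 h).symm

theorem exists_foxDeriv_eq_single {s : FreeGroup (Fin 2)}
    (hgen : ∀ r ∈ bsPi.ker, ∃ h, ∂a r = h * ∂a s) : ∃ g c, ∂a s = single g c := by
  obtain ⟨h, hh⟩ := hgen _ commutator_wordYSq_of_one_mem_ker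
  rw [foxDeriv_commutator_wordYSq_of_one] at hh
  refine exists_eq_single_of_mul_eq_single (mul_ne_zero ?_ ?_) hh.symm
  · exact sub_ne_zero.2 (ratY_pow_ne_one four_ne_zero).symm
  · exact sub_ne_zero.2 (ratY_pow_ne_one (by decide)).symm

theorem not_exists_forall_foxDeriv_eq_mul :
    ¬ ∃ s ∈ bsPi.ker, ∀ r ∈ bsPi.ker, ∃ h, ∂a r = h * ∂a s := by
  rintro ⟨s, hs, hgen⟩
  obtain ⟨g, c, hsingle⟩ := exists_foxDeriv_eq_single hgen
  obtain ⟨q, hq⟩ := exists_foxDeriv_mul_skewX_sub_one_eq hs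
  obtain ⟨h, hh⟩ := hgen _ wordY_sq_mul_inv_mem_ker
  have hsmul : ofAdd (1 : ℤ) • (ratY ^ 4 - 1) = ratY ^ 6 - 1 := by
    rw [smul_sub, smul_one, ofAdd_one_smul_ratY_pow 2]
  apply not_dvd_coeff_one_foxDeriv_wordY_sq_mul_inv
  rw [hsingle] at hq hh
  rw [hh, ← hsmul]
  exact smul_dvd_coeff_one_of_single_mul_sub_one (by decide) hq h

end BSGroup

/-- The relation module `M(G,{x,z})`, `z = y⁴`, is the abelianization of
`R = ker (F(a,b) → G)` endowed with the `ℤG`-module structure in which `G`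
acts by conjugation: `(π f) • (r [R,R]) = (f r f⁻¹) [R,R]`.  This module cannot
be generated by a single element. -/
theorem relationModule_x_y4_not_cyclic
    [Module (MonoidAlgebra ℤ BSGroup) (Additive (Abelianization ↥bsPi.ker))]
    (hact : ∀ (f : FreeGroup (Fin 2)) (r r' : ↥bsPi.ker),
      (r' : FreeGroup (Fin 2)) = f * ↑r * f⁻¹ →
      MonoidAlgebra.of ℤ BSGroup (bsPi f) • Additive.ofMul (Abelianization.of r) =
        Additive.ofMul (Abelianization.of r')) :
    ¬ ∃ m : Additive (Abelianization ↥bsPi.ker),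
        Submodule.span (MonoidAlgebra ℤ BSGroup) {m} = ⊤ := by
  rintro ⟨m, hm⟩
  obtain ⟨s, rfl⟩ := exists_ofMul_abelianization_of_eq m
  exact BSGroup.not_exists_forall_foxDeriv_eq_mul ⟨s, s.2, fun r hr ↦
    exists_foxDeriv_eq_mul_of_span_eq_top BSGroup.bsRho 0 BSGroup.bsPi_surjective hact hm ⟨r, hr⟩⟩
end

section
/- Let G = ⟨x, y | x y² x⁻¹ = y³⟩ and let Ḡ = ⟨x, z | z = [x,z]² ⟩ (where [x,z] = x z x⁻¹ z⁻¹). The map x ↦ x, z ↦ y⁴ induces an epimorphism Ḡ → G, and its kernel K is nontrivial and is a free group. -/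
open scoped commutatorElement

/-- The single relator `z ([x,z]²)⁻¹` in the free group on two generators
(generator `0` plays the role of `x`, generator `1` the role of `z`). -/
def gbarRels : Set (FreeGroup (Fin 2)) :=
  {FreeGroup.of 1 * (⁅(FreeGroup.of 0 : FreeGroup (Fin 2)), FreeGroup.of 1⁆ ^ 2)⁻¹}

/-- The group `Ḡ = ⟨x, z | z = [x,z]²⟩`. -/
abbrev GBar := PresentedGroup gbarRels

/-!
In `Ḡ` put `y := [x, z]`; then `z = y²` and the relation becomes `x y² x⁻¹ = y³`, so `Ḡ ≅ G`, and
the map `x ↦ x`, `z ↦ y⁴` turns into the endomorphism `x ↦ x`, `y ↦ y²` of `G`. It is onto because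
`[x, y²] = y`, and it kills `[x y x⁻¹, y]`, which is nontrivial by Britton's lemma in the HNN
extension `G` of `⟨y⟩ ≅ ℤ`.

The kernel is normal and meets `⟨y⟩` trivially, so it meets every conjugate of `⟨y⟩` trivially and
acts freely on the Bass–Serre tree. Instead of the tree we use action groupoids, as in the
groupoid proof of the Nielsen–Schreier theorem. Let `Γ` be an HNN extension acting on `S` with
base group acting freely. A cocycle on `S` with values in a group `X` can be gauged to be trivial
on the base group; the stable letter `t`, with `t A t⁻¹ = B`, then carries an arbitrary
`B`-invariant function `S → X`. The gauge and this function are labels on a set of arrows of the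
action groupoid, which is therefore free, and so are its vertex groups. Taking `S = Γ ⧸ H`, the
vertex groups are the conjugates of `H`.
-/

open CategoryTheory CategoryTheory.ActionCategory

universe u

section OrbitRepresentatives

variable (K : Type*) {S : Type*} [Group K] [MulAction K S]

/-- A representative of the `K`-orbit of `s`, chosen once for each orbit. -/
noncomputable def orbitRep (s : S) : S :=
  (Quotient.mk (MulAction.orbitRel K S) s).out

theorem exists_smul_orbitRep_eq (s : S) : ∃ k : K, k • orbitRep K s = s :=
  (MulAction.orbitRel K S).symm (Quotient.mk_out s)

/-- An element of `K` carrying the chosen representative of the `K`-orbit of `s` to `s`. -/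
noncomputable def orbitShift (s : S) : K :=
  (exists_smul_orbitRep_eq K s).choose

@[simp]
theorem orbitShift_smul_orbitRep (s : S) : orbitShift K s • orbitRep K s = s :=
  (exists_smul_orbitRep_eq K s).choose_spec

variable {K}

@[simp]
theorem orbitRep_smul (k : K) (s : S) : orbitRep K (k • s) = orbitRep K s :=
  congrArg Quotient.out (Quotient.sound (MulAction.mem_orbit s k))

@[simp]
theorem orbitRep_orbitRep (s : S) : orbitRep K (orbitRep K s) = orbitRep K s := by
  rw [← orbitRep_smul (orbitShift K s), orbitShift_smul_orbitRep]

theorem eq_orbitRep_of_forall_smul_eq {X : Type*} {m : S → X}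
    (hm : ∀ (k : K) (s : S), m (k • s) = m s) (s : S) : m s = m (orbitRep K s) := by
  rw [← hm (orbitShift K s) (orbitRep K s), orbitShift_smul_orbitRep]

variable [IsCancelSMul K S]

theorem orbitShift_smul (k : K) (s : S) : orbitShift K (k • s) = k * orbitShift K s := by
  apply IsCancelSMul.right_cancel _ _ (orbitRep K s)
  rw [mul_smul, orbitShift_smul_orbitRep, ← orbitRep_smul k, orbitShift_smul_orbitRep]

theorem orbitShift_eq_one {s : S} (hs : orbitRep K s = s) : orbitShift K s = 1 := by
  apply IsCancelSMul.eq_one_of_smul (x := s)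
  nth_rw 2 [← hs]
  exact orbitShift_smul_orbitRep K s

end OrbitRepresentatives

section Cocycles

open SemidirectProduct

variable {Γ S X : Type*} [Group Γ] [MulAction Γ S] [Group X]

theorem mulAutArrow_semidirect_mul_left_apply (p q : (S → X) ⋊[mulAutArrow] Γ) (s : S) :
    (p * q).left s = p.left s * q.left (p.right⁻¹ • s) :=
  rfl

theorem mulAutArrow_inl_inv_mul_mul_inl_left_apply (d : S → X)
    (p : (S → X) ⋊[mulAutArrow] Γ) (s : S) :
    ((inl d)⁻¹ * p * inl d).left s = (d s)⁻¹ * p.left s * d (p.right⁻¹ • s) := by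
  simp [mulAutArrow_semidirect_mul_left_apply]

theorem commute_inl_inr_iff {m : S → X} {γ : Γ} :
    Commute (inl m : (S → X) ⋊[mulAutArrow] Γ) (inr γ) ↔ ∀ s, m (γ • s) = m s := by
  have commute_iff : Commute (inl m : (S → X) ⋊[mulAutArrow] Γ) (inr γ) ↔
      ∀ s, m s = m (γ⁻¹ • s) := by
    simp only [Commute, SemiconjBy, SemidirectProduct.ext_iff, mul_left, left_inl, right_inl,
      map_one, left_inr, mul_one, right_inr, one_mul, funext_iff, mul_right,
      and_true]
    rfl
  rw [commute_iff, (MulAction.surjective γ).forall]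
  simp only [inv_smul_smul]

theorem curry_left_apply_eq_map (F : ActionCategory Γ S ⥤ SingleObj X) {γ : Γ} {a b : S}
    (h : γ • a = b) :
    (curry F γ).left b = F.map (⟨γ, h⟩ : @Quiver.Hom (ActionCategory Γ S) _ a b) := by
  obtain rfl : γ⁻¹ • b = a := inv_smul_eq_iff.2 h.symm
  rfl

/-- The normalised potential of a cocycle along the orbits of a subgroup `K`: a cocycle is encoded
as a section `F` of `(S → X) ⋊ Γ → Γ`, and the potential at `s` is its value on the chosen element
of `K` moving the orbit representative of `s` to `s`. -/
noncomputable def orbitPotential (K : Subgroup Γ) (F : Γ →* (S → X) ⋊[mulAutArrow] Γ) (s : S) : X :=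
  (F (orbitShift K s)).left s

theorem conj_orbitPotential_apply_eq_inr {K : Subgroup Γ} [IsCancelSMul K S]
    {F : Γ →* (S → X) ⋊[mulAutArrow] Γ} (hF : ∀ γ, (F γ).right = γ) (k : K) :
    (inl (orbitPotential K F))⁻¹ * F k * inl (orbitPotential K F) = inr (k : Γ) := by
  ext s
  · have hshift : orbitShift K s = k * orbitShift K (k⁻¹ • s) := by
      rw [← orbitShift_smul, smul_inv_smul]
    rw [mulAutArrow_inl_inv_mul_mul_inl_left_apply, hF]
    have : (F (orbitShift K s)).left s =
        (F k).left s * (F (orbitShift K (k⁻¹ • s))).left ((k : Γ)⁻¹ • s) := by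
      rw [hshift, Subgroup.coe_mul, map_mul, mulAutArrow_semidirect_mul_left_apply, hF]
    rw [orbitPotential, this]
    simp [orbitPotential, Subgroup.smul_def, mul_assoc]
  · simp [hF]

end Cocycles

section HNN

open HNNExtension SemidirectProduct

variable {G : Type u} [Group G] {A B : Subgroup G} {φ : A ≃* B}

section HNNCocycle

variable {S X : Type*} [MulAction (HNNExtension G A B φ) S] [Group X]

variable (φ) in
/-- The base group of an HNN extension, as a subgroup of the extension. -/
abbrev hnnBase : Subgroup (HNNExtension G A B φ) :=
  of.range

variable (φ) in
/-- The associated subgroup `B = t A t⁻¹`, as a subgroup of the HNN extension. -/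
abbrev hnnTarget : Subgroup (HNNExtension G A B φ) :=
  B.map of

/-- The value at `s` of the function that `t` acquires once the potential `d` has been gauged away;
it only depends on the orbit of `s` under `hnnTarget φ`. -/
noncomputable def gaugedStableValue (d w : S → X) (s : S) : X :=
  let r := orbitRep (hnnTarget φ) s
  (d r)⁻¹ * w r * d ((t : HNNExtension G A B φ)⁻¹ • r)

theorem gaugedStableValue_smul (d w : S → X) (b : B) (s : S) :
    gaugedStableValue (φ := φ) d w ((of (b : G) : HNNExtension G A B φ) • s) =
      gaugedStableValue (φ := φ) d w s := by
  have : orbitRep (hnnTarget φ) ((of (b : G) : HNNExtension G A B φ) • s) =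
      orbitRep (hnnTarget φ) s :=
    orbitRep_smul (⟨of b, Subgroup.mem_map_of_mem _ b.2⟩ : hnnTarget φ) s
  simp only [gaugedStableValue, this]

/-- The cocycle of an HNN extension with potential `d` on the base group and with value `w s` on
the stable letter at the representatives `s` of the `hnnTarget φ`-orbits. -/
noncomputable def hnnCocycle (d w : S → X) :
    HNNExtension G A B φ →* (S → X) ⋊[mulAutArrow] HNNExtension G A B φ :=
  (MulAut.conj (inl d)).toMonoidHom.comp <|
    HNNExtension.lift (inr.comp of) (inl (gaugedStableValue (φ := φ) d w) * inr t) fun a => by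
      have hcomm := commute_inl_inr_iff.2 (gaugedStableValue_smul (φ := φ) d w (φ a))
      simp only [MonoidHom.comp_apply]
      rw [mul_assoc, ← map_mul, t_mul_of, map_mul, ← mul_assoc, hcomm.eq, mul_assoc]

theorem hnnCocycle_right (d w : S → X) (γ : HNNExtension G A B φ) :
    (hnnCocycle d w γ).right = γ := by
  suffices rightHom.comp (hnnCocycle d w) = MonoidHom.id (HNNExtension G A B φ) from
    DFunLike.congr_fun this γ
  ext <;> simp [hnnCocycle]

theorem hnnCocycle_of_left (d w : S → X) (g : G) (s : S) :
    (hnnCocycle (φ := φ) d w (of g)).left s =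
      d s * (d ((of g : HNNExtension G A B φ)⁻¹ • s))⁻¹ := by
  simp [hnnCocycle, mulAutArrow_semidirect_mul_left_apply]

theorem hnnCocycle_t_left (d w : S → X) {s : S} (hs : orbitRep (hnnTarget φ) s = s) :
    (hnnCocycle (φ := φ) d w t).left s = w s := by
  simp [hnnCocycle, mulAutArrow_semidirect_mul_left_apply, gaugedStableValue, hs, mul_assoc]

theorem left_t_smul_of_forall_apply_of_eq_inr
    {F : HNNExtension G A B φ →* (S → X) ⋊[mulAutArrow] HNNExtension G A B φ}
    (hF : ∀ γ, (F γ).right = γ) (hof : ∀ g, F (of g) = inr (of g)) (b : B) (s : S) :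
    (F t).left ((of (b : G) : HNNExtension G A B φ) • s) = (F t).left s := by
  refine commute_inl_inr_iff.1 (mul_right_cancel (b := inr t) ?_) s
  have hFt : inl (F t).left * inr t = F t := by
    nth_rw 2 [← hF t]
    exact inl_left_mul_inr_right _
  calc inl (F t).left * inr (of (b : G)) * inr t
      = inl (F t).left * inr t * inr (of (φ.symm b : G)) := by
        rw [mul_assoc, mul_assoc, ← map_mul, ← map_mul, of_mul_t]
    _ = F (t * of (φ.symm b : G)) := by rw [hFt, map_mul, hof]
    _ = inr (of (b : G)) * inl (F t).left * inr t := by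
        rw [← of_mul_t, map_mul, hof, mul_assoc, hFt]

theorem eq_hnnCocycle [IsCancelSMul (hnnBase φ) S]
    {F : HNNExtension G A B φ →* (S → X) ⋊[mulAutArrow] HNNExtension G A B φ}
    (hF : ∀ γ, (F γ).right = γ) {w : S → X}
    (hw : ∀ s, orbitRep (hnnTarget φ) s = s → (F t).left s = w s) :
    F = hnnCocycle (orbitPotential (hnnBase φ) F) w := by
  set d := orbitPotential (hnnBase φ) F
  let gauged := (MulAut.conj (inl d)⁻¹).toMonoidHom.comp F
  have gauged_of (g : G) : gauged (of g) = inr (of g) := by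
    simpa [gauged] using conj_orbitPotential_apply_eq_inr hF (⟨of g, g, rfl⟩ : hnnBase φ)
  have gauged_right (γ) : (gauged γ).right = γ := by simp [gauged, hF]
  have gauged_t_left (s) : (gauged t).left s =
      (d s)⁻¹ * (F t).left s * d ((t : HNNExtension G A B φ)⁻¹ • s) := by
    simp [gauged, mulAutArrow_semidirect_mul_left_apply, hF]
  have gauged_t : gauged t = inl (gaugedStableValue (φ := φ) d w) * inr t := by
    rw [← mk_eq_inl_mul_inr]
    ext s
    · have invariant (b : hnnTarget φ) (s : S) : (gauged t).left (b • s) = (gauged t).left s := by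
        obtain ⟨_, b, hb, rfl⟩ := b
        exact left_t_smul_of_forall_apply_of_eq_inr gauged_right gauged_of ⟨b, hb⟩ s
      rw [eq_orbitRep_of_forall_smul_eq invariant, gauged_t_left, hw _ (orbitRep_orbitRep s)]
      rfl
    · exact gauged_right t
  have F_eq (γ) : F γ = inl d * gauged γ * (inl d)⁻¹ := by simp [gauged, mul_assoc]
  ext1
  · ext1 g
    simp [F_eq, gauged_of, hnnCocycle]
  · simp [F_eq, gauged_t, hnnCocycle]

end HNNCocycle

section ActionGroupoid

variable {S : Type u} [MulAction (HNNExtension G A B φ) S]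

variable (φ) in
/-- The free generating arrows of the action groupoid of an HNN extension whose base group acts
freely on `S`: within each orbit of the base group, a star joining the representative to the other
points, and one translation by the stable letter for each orbit of `hnnTarget φ`. -/
inductive HNNArrow : S → S → Type u
  | star (s : S) (hs : orbitRep (hnnBase φ) s ≠ s) : HNNArrow (orbitRep (hnnBase φ) s) s
  | stable (s : S) (hs : orbitRep (hnnTarget φ) s = s) :
      HNNArrow ((t : HNNExtension G A B φ)⁻¹ • s) s

namespace HNNArrow

/-- The element of the HNN extension by which a generating arrow translates. -/
noncomputable def elt {a b : S} : HNNArrow φ a b → HNNExtension G A B φ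
  | star s _ => orbitShift (hnnBase φ) s
  | stable _ _ => t

theorem elt_smul {a b : S} (e : HNNArrow φ a b) : e.elt • a = b := by
  cases e with
  | star => exact orbitShift_smul_orbitRep (hnnBase φ) b
  | stable => exact smul_inv_smul t b

variable {X : Type*} [Group X] (f : ∀ {a b : S}, HNNArrow φ a b → X)

open scoped Classical in
/-- The potential on the base orbits prescribed by a labelling of the generating arrows. -/
noncomputable def starLabel (s : S) : X :=
  if hs : orbitRep (hnnBase φ) s = s then 1 else f (star s hs)

open scoped Classical in
/-- The values on the stable letter prescribed by a labelling of the generating arrows, extended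
by `1` away from the orbit representatives. -/
noncomputable def stableLabel (s : S) : X :=
  if hs : orbitRep (hnnTarget φ) s = s then f (stable s hs) else 1

theorem hnnCocycle_elt_left {a b : S} (e : HNNArrow φ a b) :
    (hnnCocycle (starLabel f) (stableLabel f) e.elt).left b = f e := by
  cases e with
  | star _ hb =>
    obtain ⟨g, hg⟩ := (orbitShift (hnnBase φ) b).2
    have hrep : (of g : HNNExtension G A B φ)⁻¹ • b = orbitRep (hnnBase φ) b := by
      rw [hg, inv_smul_eq_iff]
      exact (orbitShift_smul_orbitRep (hnnBase φ) b).symm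
    rw [elt, ← hg, hnnCocycle_of_left, hrep]
    simp [starLabel, hb]
  | stable _ hb =>
    rw [elt, hnnCocycle_t_left _ _ hb, stableLabel, dif_pos hb]

theorem eq_hnnCocycle_of_forall_elt_left [IsCancelSMul (hnnBase φ) S]
    {F : HNNExtension G A B φ →* (S → X) ⋊[mulAutArrow] HNNExtension G A B φ}
    (hF : ∀ γ, (F γ).right = γ)
    (hf : ∀ {a b : S} (e : HNNArrow φ a b), (F e.elt).left b = f e) :
    F = hnnCocycle (starLabel f) (stableLabel f) := by
  have potential_eq : orbitPotential (hnnBase φ) F = starLabel f := by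
    ext s
    by_cases hs : orbitRep (hnnBase φ) s = s
    · simp [orbitPotential, orbitShift_eq_one hs, starLabel, hs]
    · rw [starLabel, dif_neg hs]
      exact hf (star s hs)
  rw [← potential_eq]
  refine eq_hnnCocycle hF fun s hs => ?_
  rw [stableLabel, dif_pos hs]
  exact hf (stable s hs)

end HNNArrow

variable (φ S) in
/-- The free groupoid structure, generated by `HNNArrow`, on the action groupoid of an HNN extension
whose base group acts freely. -/
@[reducible]
noncomputable def isFreeGroupoidActionCategoryHNN [IsCancelSMul (hnnBase φ) S] :
    IsFreeGroupoid (ActionCategory (HNNExtension G A B φ) S) where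
  quiverGenerators := ⟨fun a b => HNNArrow φ a.back b.back⟩
  of e := ⟨e.elt, e.elt_smul⟩
  unique_lift {X} _ f := by
    let label {a b : S} (e : HNNArrow φ a b) : X := @f ⟨(), a⟩ ⟨(), b⟩ e
    refine ⟨uncurry (hnnCocycle (HNNArrow.starLabel label) (HNNArrow.stableLabel label))
      (hnnCocycle_right _ _), ?_, fun E hE => ?_⟩
    · rintro ⟨⟨⟩, a⟩ ⟨⟨⟩, b⟩ e
      exact HNNArrow.hnnCocycle_elt_left label e
    · have curry_eq : curry E = hnnCocycle _ _ :=
        HNNArrow.eq_hnnCocycle_of_forall_elt_left label (fun _ => rfl) fun {a b} e =>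
          (curry_left_apply_eq_map E e.elt_smul).trans (hE ⟨(), a⟩ ⟨(), b⟩ e)
      simp only [← curry_eq]
      exact Functor.hext (fun _ => rfl) (ActionCategory.cases fun _ _ => HEq.rfl)

end ActionGroupoid

end HNN

theorem isFreeGroup_of_isFreeGroupoid_quotient {Γ : Type u} [Group Γ] (H : Subgroup Γ)
    [IsFreeGroupoid (ActionCategory Γ (Γ ⧸ H))] : IsFreeGroup H := by
  let vertexGroup := @End (ActionCategory Γ (Γ ⧸ H)) Groupoid.toCategory.toCategoryStruct
    (objEquiv Γ (Γ ⧸ H) (1 : Γ))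
  have connected : @IsConnected (ActionCategory Γ (Γ ⧸ H)) Groupoid.toCategory :=
    inferInstanceAs (IsConnected (ActionCategory Γ (Γ ⧸ H)))
  have : IsFreeGroup vertexGroup := IsFreeGroupoid.endIsFreeOfConnectedFree _
  let e : vertexGroup ≃* H := endMulEquivSubgroup H
  exact IsFreeGroup.ofMulEquiv e

section HNN

open HNNExtension

variable {G : Type u} [Group G] {A B : Subgroup G} {φ : A ≃* B}

theorem isCancelSMul_hnnBase {S : Type*} [MulAction (HNNExtension G A B φ) S]
    (hS : ∀ (g : G) (s : S), (of g : HNNExtension G A B φ) • s = s → g = 1) :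
    IsCancelSMul (hnnBase φ) S := by
  rw [isCancelSMul_iff_eq_one_of_smul_eq]
  rintro ⟨_, g, rfl⟩ s hs
  obtain rfl := hS g s hs
  exact Subtype.ext (map_one of)

theorem isFreeGroup_of_disjoint_conj_hnnBase (H : Subgroup (HNNExtension G A B φ))
    (hH : ∀ (γ : HNNExtension G A B φ) (g : G), γ⁻¹ * of g * γ ∈ H → g = 1) : IsFreeGroup H := by
  have base_acts_freely (g : G) (x : HNNExtension G A B φ ⧸ H)
      (hx : (of g : HNNExtension G A B φ) • x = x) : g = 1 := by
    induction x using QuotientGroup.induction_on with | H γ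
    refine hH γ g ?_
    rw [mul_assoc]
    exact QuotientGroup.eq.1 hx.symm
  have := isCancelSMul_hnnBase base_acts_freely
  let := isFreeGroupoidActionCategoryHNN φ (HNNExtension G A B φ ⧸ H)
  exact isFreeGroup_of_isFreeGroupoid_quotient H

theorem isFreeGroup_ker_of_injective_comp_of {P : Type*} [Group P]
    {ψ : HNNExtension G A B φ →* P} (hψ : Function.Injective (ψ.comp of)) : IsFreeGroup ψ.ker := by
  refine isFreeGroup_of_disjoint_conj_hnnBase ψ.ker fun γ g hg => ?_
  have hker : of g ∈ ψ.ker := by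
    simpa [mul_assoc] using ψ.normal_ker.conj_mem _ hg γ
  exact (injective_iff_map_eq_one _).1 hψ g hker

/-- `t g t⁻¹ h t g⁻¹ t⁻¹ h⁻¹` is reduced in the sense of Britton's lemma. -/
theorem commutatorElement_conj_t_of_ne_one {g h : G} (hg : g ∉ A) (hh : h ∉ B) :
    ⁅(t * of g * t⁻¹ : HNNExtension G A B φ), (of h : HNNExtension G A B φ)⁆ ≠ 1 := by
  intro heq
  let w : NormalWord.ReducedWord G A B :=
    { head := 1
      toList := [(1, g), (-1, h), (1, g⁻¹), (-1, h⁻¹)]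
      chain := by simp [hg, hh] }
  have hprod : w.prod φ = 1 := by
    rw [← heq]
    simp [w, NormalWord.ReducedWord.prod, commutatorElement_def, mul_assoc]
  have hnil : w.toList = [] :=
    HNNExtension.ReducedWord.toList_eq_nil_of_mem_of_range φ w (hprod ▸ one_mem _)
  exact List.cons_ne_nil _ _ hnil

end HNN

theorem isFreeGroup_ker_comp_mulEquiv {M N P : Type*} [Group M] [Group N] [Group P]
    (f : N →* P) [IsFreeGroup f.ker] (e : M ≃* N) : IsFreeGroup (f.comp (e : M →* N)).ker := by
  rw [MonoidHom.ker_comp_mulEquiv]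
  exact IsFreeGroup.ofMulEquiv (e.symm.subgroupMap f.ker)

section PowerSubgroups

variable {C : Type*} [CommGroup C] [IsMulTorsionFree C] (m n : ℕ) [NeZero m] [NeZero n]

/-- The isomorphism `c ^ m ↦ c ^ n` between the power subgroups of a torsion-free abelian group. -/
noncomputable def powRangeEquiv :
    (powMonoidHom m : C →* C).range ≃* (powMonoidHom n : C →* C).range :=
  (MonoidHom.ofInjective (pow_left_injective (NeZero.ne m))).symm.trans
    (MonoidHom.ofInjective (pow_left_injective (NeZero.ne n)))

theorem powRangeEquiv_apply (c : C) : powRangeEquiv m n ⟨c ^ m, c, rfl⟩ = ⟨c ^ n, c, rfl⟩ := by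
  have hpow : (⟨c ^ m, c, rfl⟩ : (powMonoidHom m : C →* C).range) =
      MonoidHom.ofInjective (f := powMonoidHom m) (pow_left_injective (NeZero.ne m)) c := rfl
  rw [hpow, powRangeEquiv, MulEquiv.trans_apply, MulEquiv.symm_apply_apply]
  rfl

end PowerSubgroups

theorem ofAdd_one_notMem_range_powMonoidHom {k : ℕ} (hk : k ≠ 1) :
    Multiplicative.ofAdd 1 ∉ (powMonoidHom k : Multiplicative ℤ →* Multiplicative ℤ).range := by
  rintro ⟨b, hb⟩
  have hmul : (k : ℤ) * b.toAdd = 1 := by simpa using congrArg Multiplicative.toAdd hb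
  exact hk (by simpa using Int.isUnit_iff_natAbs_eq.1 (IsUnit.of_mul_eq_one _ hmul))

/-- The Baumslag–Solitar group `BS(m, n) = ⟨t, y | t yᵐ t⁻¹ = yⁿ⟩` as an HNN extension of `ℤ`. -/
abbrev BaumslagSolitarHNN (m n : ℕ) [NeZero m] [NeZero n] : Type :=
  HNNExtension (Multiplicative ℤ) _ _ (powRangeEquiv m n)

namespace BaumslagSolitarHNN

open HNNExtension

variable (m n : ℕ) [NeZero m] [NeZero n]

/-- The generator of the base group `ℤ`. -/
noncomputable def y : BaumslagSolitarHNN m n :=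
  of (Multiplicative.ofAdd 1)

theorem t_mul_y_pow : (t * y m n ^ m : BaumslagSolitarHNN m n) = y m n ^ n * t := by
  have := t_mul_of (φ := powRangeEquiv m n) ⟨Multiplicative.ofAdd (1 : ℤ) ^ m, _, rfl⟩
  simpa only [powRangeEquiv_apply, map_pow, y] using this

variable {m n}

theorem hom_ext {P : Type*} [Group P] {f g : BaumslagSolitarHNN m n →* P}
    (ht : f t = g t) (hy : f (y m n) = g (y m n)) : f = g := by
  refine HNNExtension.hom_ext ?_ ht
  ext
  exact hy

/-- The homomorphism out of `BS(m, n)` given by a pair satisfying its defining relation. -/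
noncomputable def lift {P : Type*} [Group P] (a b : P) (h : a * b ^ m = b ^ n * a) :
    BaumslagSolitarHNN m n →* P :=
  HNNExtension.lift (zpowersHom P b) a <| by
    rintro ⟨_, c, rfl⟩
    have hpow : powRangeEquiv m n ⟨c ^ m, c, rfl⟩ = ⟨c ^ n, c, rfl⟩ := powRangeEquiv_apply m n c
    have hsemiconj : SemiconjBy a ((b ^ m) ^ c.toAdd) ((b ^ n) ^ c.toAdd) :=
      SemiconjBy.zpow_right h c.toAdd
    simp only [powMonoidHom_apply, hpow, map_pow, zpowersHom_apply]
    simpa only [← zpow_natCast, zpow_comm b] using! hsemiconj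

@[simp]
theorem lift_t {P : Type*} [Group P] {a b : P} (h : a * b ^ m = b ^ n * a) : lift a b h t = a :=
  HNNExtension.lift_t _ _ _

@[simp]
theorem lift_y {P : Type*} [Group P] {a b : P} (h : a * b ^ m = b ^ n * a) :
    lift a b h (y m n) = b := by
  simp [lift, y]

theorem isFreeGroup_ker {P : Type*} [Group P] {ψ : BaumslagSolitarHNN m n →* P}
    (hψ : ¬ IsOfFinOrder (ψ (y m n))) : IsFreeGroup ψ.ker := by
  apply isFreeGroup_ker_of_injective_comp_of
  have hcomp : ψ.comp of = zpowersHom P (ψ (y m n)) := by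
    ext
    simp [y]
  rw [hcomp]
  exact (injective_zpow_iff_not_isOfFinOrder.2 hψ).comp Multiplicative.toAdd.injective

variable (m n)

theorem not_isOfFinOrder_y : ¬ IsOfFinOrder (y m n) := by
  rw [y, (HNNExtension.of_injective _).isOfFinOrder_iff]
  exact not_isOfFinOrder_of_isMulTorsionFree (by decide)

theorem commutatorElement_conj_t_y_ne_one (hm : m ≠ 1) (hn : n ≠ 1) :
    ⁅(t * y m n * t⁻¹ : BaumslagSolitarHNN m n), y m n⁆ ≠ 1 :=
  commutatorElement_conj_t_of_ne_one (ofAdd_one_notMem_range_powMonoidHom hm)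
    (ofAdd_one_notMem_range_powMonoidHom hn)

end BaumslagSolitarHNN

theorem bsX_mul_bsY_sq : bsX * bsY ^ 2 = bsY ^ 3 * bsX := by
  have hrel : bsX * bsY ^ 2 * bsX⁻¹ * (bsY ^ 3)⁻¹ = 1 := PresentedGroup.one_of_mem rfl
  rwa [mul_inv_eq_one, mul_inv_eq_iff_eq_mul] at hrel

/-- The homomorphism out of `G` given by a pair satisfying its defining relation. -/
def bsLift {P : Type*} [Group P] (a b : P) (h : a * b ^ 2 = b ^ 3 * a) : BSGroup →* P :=
  PresentedGroup.toGroup (f := ![a, b]) (by rintro _ rfl; simp [h])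

theorem bs_hom_ext {P : Type*} [Group P] {f g : BSGroup →* P} (hx : f bsX = g bsX)
    (hy : f bsY = g bsY) : f = g :=
  PresentedGroup.ext (Fin.forall_fin_two.2 ⟨hx, hy⟩)

section bsLift

variable {P : Type*} [Group P] {a b : P} (h : a * b ^ 2 = b ^ 3 * a)

@[simp]
theorem bsLift_bsX : bsLift a b h bsX = a :=
  PresentedGroup.toGroup.of _

@[simp]
theorem bsLift_bsY : bsLift a b h bsY = b :=
  PresentedGroup.toGroup.of _

end bsLift

/-- `G` is the HNN extension of `ℤ` identifying `2ℤ` with `3ℤ`. -/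
noncomputable def bsEquivHNN : BSGroup ≃* BaumslagSolitarHNN 2 3 :=
  MonoidHom.toMulEquiv
    (bsLift HNNExtension.t (BaumslagSolitarHNN.y 2 3) (BaumslagSolitarHNN.t_mul_y_pow 2 3))
    (BaumslagSolitarHNN.lift bsX bsY bsX_mul_bsY_sq)
    (bs_hom_ext (by simp) (by simp))
    (BaumslagSolitarHNN.hom_ext (by simp) (by simp))

theorem not_isOfFinOrder_bsY : ¬ IsOfFinOrder bsY := by
  have himage : bsEquivHNN bsY = BaumslagSolitarHNN.y 2 3 := by simp [bsEquivHNN]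
  intro h
  apply BaumslagSolitarHNN.not_isOfFinOrder_y 2 3
  exact himage ▸ (bsEquivHNN : BSGroup →* BaumslagSolitarHNN 2 3).isOfFinOrder h

theorem commutatorElement_conj_bsX_bsY_ne_one : ⁅bsX * bsY * bsX⁻¹, bsY⁆ ≠ 1 := by
  intro h
  apply BaumslagSolitarHNN.commutatorElement_conj_t_y_ne_one 2 3 (by decide) (by decide)
  simpa [map_commutatorElement, bsEquivHNN] using congrArg bsEquivHNN h

theorem isFreeGroup_ker_of_not_isOfFinOrder_bsY {P : Type*} [Group P] {ψ : BSGroup →* P}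
    (hψ : ¬ IsOfFinOrder (ψ bsY)) : IsFreeGroup ψ.ker := by
  let ψHNN := ψ.comp (bsEquivHNN.symm : BaumslagSolitarHNN 2 3 →* BSGroup)
  have hψ_y : ψHNN (BaumslagSolitarHNN.y 2 3) = ψ bsY := by simp [ψHNN, bsEquivHNN]
  have : IsFreeGroup ψHNN.ker := BaumslagSolitarHNN.isFreeGroup_ker (hψ_y ▸ hψ)
  have hcomp : ψHNN.comp (bsEquivHNN : BSGroup →* BaumslagSolitarHNN 2 3) = ψ := by
    ext
    simp [ψHNN]
  rw [← hcomp]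
  exact isFreeGroup_ker_comp_mulEquiv ψHNN bsEquivHNN

theorem bsX_conj_bsY_sq : bsX * bsY ^ 2 * bsX⁻¹ = bsY ^ 3 :=
  mul_inv_eq_of_eq_mul bsX_mul_bsY_sq

theorem commutatorElement_bsX_bsY_sq : ⁅bsX, bsY ^ 2⁆ = bsY := by
  rw [commutatorElement_def, bsX_conj_bsY_sq, mul_inv_eq_iff_eq_mul, ← pow_succ']

/-- The endomorphism `x ↦ x`, `y ↦ y²` of `G`. -/
def bsSquareEnd : BSGroup →* BSGroup :=
  bsLift bsX (bsY ^ 2) <| by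
    have hsemiconj : SemiconjBy bsX (bsY ^ 2) (bsY ^ 3) := bsX_mul_bsY_sq
    rw [pow_right_comm bsY 2 3]
    exact hsemiconj.pow_right 2

theorem bsSquareEnd_bsX : bsSquareEnd bsX = bsX :=
  bsLift_bsX _

theorem bsSquareEnd_bsY : bsSquareEnd bsY = bsY ^ 2 :=
  bsLift_bsY _

theorem bsSquareEnd_surjective : Function.Surjective bsSquareEnd := by
  have hx : bsX ∈ bsSquareEnd.range := ⟨bsX, bsSquareEnd_bsX⟩
  have hy : bsY ∈ bsSquareEnd.range :=
    ⟨⁅bsX, bsY⁆, by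
      rw [map_commutatorElement, bsSquareEnd_bsX, bsSquareEnd_bsY, commutatorElement_bsX_bsY_sq]⟩
  exact fun g => PresentedGroup.generated_by _ _ (Fin.forall_fin_two.2 ⟨hx, hy⟩) g

theorem commutatorElement_mem_ker_bsSquareEnd :
    ⁅bsX * bsY * bsX⁻¹, bsY⁆ ∈ bsSquareEnd.ker := by
  simp only [MonoidHom.mem_ker, map_commutatorElement, map_mul, map_inv, bsSquareEnd_bsX,
    bsSquareEnd_bsY, bsX_conj_bsY_sq]
  exact commutatorElement_eq_one_iff_commute.2 (Commute.pow_pow_self bsY 3 2)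

theorem ker_bsSquareEnd_ne_bot : bsSquareEnd.ker ≠ ⊥ :=
  fun h => commutatorElement_conj_bsX_bsY_ne_one <|
    Subgroup.mem_bot.1 (h ▸ commutatorElement_mem_ker_bsSquareEnd)

theorem isFreeGroup_ker_bsSquareEnd : IsFreeGroup bsSquareEnd.ker := by
  apply isFreeGroup_ker_of_not_isOfFinOrder_bsY
  rw [bsSquareEnd_bsY, isOfFinOrder_pow]
  simp [not_isOfFinOrder_bsY]

theorem gbar_of_one_eq_commutatorElement_sq :
    (PresentedGroup.of 1 : GBar) = ⁅(PresentedGroup.of 0 : GBar), PresentedGroup.of 1⁆ ^ 2 :=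
  mul_inv_eq_one.1 (PresentedGroup.one_of_mem (rels := gbarRels) rfl)

/-- The homomorphism out of `Ḡ` given by a pair satisfying its defining relation. -/
def gbarLift {P : Type*} [Group P] (a b : P) (h : b = ⁅a, b⁆ ^ 2) : GBar →* P :=
  PresentedGroup.toGroup (f := ![a, b]) <| by
    rintro _ rfl
    simpa [map_commutatorElement, mul_inv_eq_one] using h

section gbarLift

variable {P : Type*} [Group P] {a b : P} (h : b = ⁅a, b⁆ ^ 2)

@[simp]
theorem gbarLift_of_zero : gbarLift a b h (PresentedGroup.of 0) = a :=
  PresentedGroup.toGroup.of _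

@[simp]
theorem gbarLift_of_one : gbarLift a b h (PresentedGroup.of 1) = b :=
  PresentedGroup.toGroup.of _

end gbarLift

theorem gbar_hom_ext {P : Type*} [Group P] {f g : GBar →* P}
    (hx : f (PresentedGroup.of 0) = g (PresentedGroup.of 0))
    (hz : f (PresentedGroup.of 1) = g (PresentedGroup.of 1)) : f = g :=
  PresentedGroup.ext (Fin.forall_fin_two.2 ⟨hx, hz⟩)

theorem mul_commutatorElement_sq_of_eq_commutatorElement_sq {P : Type*} [Group P] {a b : P}
    (h : b = ⁅a, b⁆ ^ 2) : a * ⁅a, b⁆ ^ 2 = ⁅a, b⁆ ^ 3 * a := by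
  calc a * ⁅a, b⁆ ^ 2 = a * b := by rw [← h]
    _ = ⁅a, b⁆ * b * a := by simp [commutatorElement_def]
    _ = ⁅a, b⁆ ^ 3 * a := by nth_rw 2 [h]; rw [← pow_succ']

/-- The isomorphism between `Ḡ` and `G` identifying `z` with `y²`, hence `[x, z]` with `y`. -/
def gbarEquivBS : GBar ≃* BSGroup :=
  MonoidHom.toMulEquiv
    (gbarLift bsX (bsY ^ 2) (by rw [commutatorElement_bsX_bsY_sq]))
    (bsLift (PresentedGroup.of 0) ⁅(PresentedGroup.of 0 : GBar), PresentedGroup.of 1⁆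
      (mul_commutatorElement_sq_of_eq_commutatorElement_sq gbar_of_one_eq_commutatorElement_sq))
    (gbar_hom_ext (by simp) (by simp [← gbar_of_one_eq_commutatorElement_sq]))
    (bs_hom_ext (by simp) (by simp [map_commutatorElement, commutatorElement_bsX_bsY_sq]))

theorem gbarEquivBS_of_zero : gbarEquivBS (PresentedGroup.of 0) = bsX := by
  simp [gbarEquivBS]

theorem gbarEquivBS_of_one : gbarEquivBS (PresentedGroup.of 1) = bsY ^ 2 := by
  simp [gbarEquivBS]

/-- The epimorphism `x ↦ x`, `z ↦ y⁴` from `Ḡ` onto `G`, as an isomorphism followed by an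
endomorphism of `G`. -/
def gbarToBS : GBar →* BSGroup :=
  bsSquareEnd.comp (gbarEquivBS : GBar →* BSGroup)

theorem gbarToBS_of_zero : gbarToBS (PresentedGroup.of 0) = bsX := by
  simp [gbarToBS, gbarEquivBS_of_zero, bsSquareEnd_bsX]

theorem gbarToBS_of_one : gbarToBS (PresentedGroup.of 1) = bsY ^ 4 := by
  simp [gbarToBS, gbarEquivBS_of_one, bsSquareEnd_bsY, ← pow_mul]

theorem gbarToBS_surjective : Function.Surjective gbarToBS :=
  bsSquareEnd_surjective.comp gbarEquivBS.surjective

theorem ker_gbarToBS_ne_bot : gbarToBS.ker ≠ ⊥ := by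
  rw [gbarToBS, MonoidHom.ker_comp_mulEquiv, Ne, Subgroup.map_eq_bot_iff_of_injective]
  exacts [ker_bsSquareEnd_ne_bot, gbarEquivBS.symm.injective]

theorem isFreeGroup_ker_gbarToBS : IsFreeGroup gbarToBS.ker :=
  have := isFreeGroup_ker_bsSquareEnd
  isFreeGroup_ker_comp_mulEquiv bsSquareEnd gbarEquivBS

/-- The assignment `x ↦ x`, `z ↦ y⁴` induces a (unique) homomorphism
`Ḡ = ⟨x, z | z = [x,z]²⟩ → G = ⟨x, y | x y² x⁻¹ = y³⟩`; it is surjective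
and its kernel `K` is nontrivial and free. -/
theorem gbar_to_bs_kernel_nontrivial_free :
    (∃ φ : GBar →* BSGroup,
        φ (PresentedGroup.of 0) = bsX ∧ φ (PresentedGroup.of 1) = bsY ^ 4) ∧
    ∀ φ : GBar →* BSGroup,
      φ (PresentedGroup.of 0) = bsX → φ (PresentedGroup.of 1) = bsY ^ 4 →
      Function.Surjective φ ∧ φ.ker ≠ ⊥ ∧ IsFreeGroup ↥φ.ker := by
  refine ⟨⟨gbarToBS, gbarToBS_of_zero, gbarToBS_of_one⟩, fun φ hx hz => ?_⟩
  obtain rfl : φ = gbarToBS :=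
    gbar_hom_ext (hx.trans gbarToBS_of_zero.symm) (hz.trans gbarToBS_of_one.symm)
  exact ⟨gbarToBS_surjective, ker_gbarToBS_ne_bot, isFreeGroup_ker_gbarToBS⟩
end

section
/- In the presented group A = ⟨ u_i (i ∈ ℤ) | u_{i+1}² = u_i³ (i ∈ ℤ) ⟩, the commutator [u₀, u₁] = u₀ u₁ u₀⁻¹ u₁⁻¹ is a nontrivial element. -/
open scoped commutatorElement

/-- The relators `u_{i+1}² u_i⁻³` (`i ∈ ℤ`) in the free group on generators
`u_i` indexed by `ℤ`. -/
def aRels : Set (FreeGroup ℤ) :=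
  Set.range fun i : ℤ => FreeGroup.of (i + 1) ^ 2 * (FreeGroup.of i ^ 3)⁻¹

/-- The group `A = ⟨ u_i (i ∈ ℤ) | u_{i+1}² = u_i³ ⟩`. -/
abbrev AGroup := PresentedGroup aRels

/-!
Nontrivial homotheties of the complex line with different centres never commute. For `i < j`, send
`u_l` to a homothety with centre `0` if `l ≤ i`, to the identity if `i < l < j`, and to a homothety
with centre `1` if `j ≤ l`. The relations hold across the gap if the ratio at `i` is a cube root of
unity and the ratio at `j` is a square root of unity, and both can be chosen nontrivial; they hold
on either side of the gap for a suitable choice of the remaining ratios, because nonzero complex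
numbers have roots of every order.
-/

/-- The relators `u_{l+1}ᵐ u_l⁻ⁿ` (`l ∈ ℤ`); the relators of `A` are the case `m = 2`, `n = 3`. -/
def powRels (m n : ℕ) : Set (FreeGroup ℤ) :=
  Set.range fun l : ℤ => FreeGroup.of (l + 1) ^ m * (FreeGroup.of l ^ n)⁻¹

/-- A bi-infinite sequence satisfying the relations `u_{l+1}ᵐ = u_lⁿ`, that is, the images of the
generators under a homomorphism out of `PresentedGroup (powRels m n)`. -/
def IsPowChain {G : Type*} [Monoid G] (m n : ℕ) (v : ℤ → G) : Prop :=
  ∀ l, v (l + 1) ^ m = v l ^ n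

namespace IsPowChain

section Monoid

variable {G H : Type*} [Monoid G] [Monoid H] {m n : ℕ}

lemma map {v : ℤ → G} (hv : IsPowChain m n v) (φ : G →* H) :
    IsPowChain m n fun l => φ (v l) := fun l => by
  rw [← map_pow, ← map_pow, hv l]

lemma splice {f g : ℤ → G} (hf : IsPowChain m n f) (hg : IsPowChain m n g) {i j : ℤ} (hij : i < j)
    (hfi : f i ^ n = 1) (hgj : g j ^ m = 1) :
    IsPowChain m n fun l => if l ≤ i then f l else if l < j then 1 else g l := by
  intro l
  rcases lt_trichotomy l i with hl | rfl | hl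
  · simpa only [if_pos hl.le, if_pos (Int.add_one_le_of_lt hl)] using hf l
  · rcases (Int.add_one_le_of_lt hij).lt_or_eq with hj | rfl
    · simp [hj, hfi]
    · simp [hfi, hgj]
  · have hil : ¬ l ≤ i := hl.not_ge
    have hil' : ¬ l + 1 ≤ i := by omega
    rcases lt_trichotomy (l + 1) j with hj | rfl | hj
    · simp [hil, hil', hj, (lt_add_one l).trans hj]
    · simp [hil, hil', hgj]
    · have hjl : ¬ l < j := by omega
      simpa only [if_neg hil, if_neg hil', if_neg hjl, if_neg hj.not_gt] using hg l

end Monoid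

lemma commute_of_commute_of {G : Type*} [Group G] {m n : ℕ} {v : ℤ → G} (hv : IsPowChain m n v)
    {i j : ℤ}
    (hij : Commute (PresentedGroup.of i : PresentedGroup (powRels m n)) (PresentedGroup.of j)) :
    Commute (v i) (v j) := by
  have hrels : ∀ r ∈ powRels m n, FreeGroup.lift v r = 1 := by
    rintro _ ⟨l, rfl⟩
    simp [hv l]
  simpa only [PresentedGroup.toGroup.of] using hij.map (PresentedGroup.toGroup hrels)

end IsPowChain

lemma exists_isPowChain_apply_eq {m n : ℕ} (hm : m ≠ 0) (hn : n ≠ 0) (i : ℤ) (z : ℂˣ) :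
    ∃ v : ℤ → ℂˣ, IsPowChain m n v ∧ v i = z := by
  refine ⟨fun l => Units.mk0 (Complex.exp (Complex.log z * (n / m : ℂ) ^ (l - i)))
    (Complex.exp_ne_zero _), fun l => ?_, ?_⟩
  · have hm' : (m : ℂ) ≠ 0 := Nat.cast_ne_zero.mpr hm
    have hn' : (n : ℂ) ≠ 0 := Nat.cast_ne_zero.mpr hn
    ext
    simp only [Units.val_pow_eq_pow_val, Units.val_mk0, ← Complex.exp_nat_mul]
    rw [add_sub_right_comm, zpow_add_one₀ (div_ne_zero hn' hm')]
    congr 1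
    field_simp
  · ext
    simp [Complex.exp_log]

lemma exists_units_pow_eq_one_ne_one {n : ℕ} (hn : 1 < n) : ∃ z : ℂˣ, z ^ n = 1 ∧ z ≠ 1 := by
  have hζ := (Complex.isPrimitiveRoot_exp n (by omega)).isUnit_unit (by omega)
  exact ⟨_, hζ.pow_eq_one, hζ.ne_one hn⟩

lemma eq_one_or_eq_one_of_commute_homothety {R V P : Type*} [CommRing R] [IsDomain R]
    [AddCommGroup V] [Module R V] [Module.IsTorsionFree R V] [AddTorsor V P] {p q : P} (hpq : p ≠ q)
    {c d : Rˣ} (h : Commute (AffineEquiv.homothetyUnitsMulHom p c)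
      (AffineEquiv.homothetyUnitsMulHom q d)) :
    c = 1 ∨ d = 1 := by
  have hp : (c : R) • ((d : R) • (p -ᵥ q) - (p -ᵥ q)) = (d : R) • (p -ᵥ q) - (p -ᵥ q) := by
    have := congrArg (fun φ : P ≃ᵃ[R] P => φ p -ᵥ p) h.eq
    simpa [AffineMap.homothety_apply, vadd_vsub_assoc, sub_eq_add_neg, smul_comm (d : R) (c : R)]
      using this
  have hsmul : (((c : R) - 1) * ((d : R) - 1)) • (p -ᵥ q) = 0 := by
    rw [mul_smul, sub_smul _ (1 : R), sub_smul _ (1 : R), one_smul, one_smul, hp, sub_self]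
  simpa [sub_eq_zero, hpq] using hsmul

lemma exists_isPowChain_not_commute {m n : ℕ} (hm : 1 < m) (hn : 1 < n) {i j : ℤ} (hij : i < j) :
    ∃ v : ℤ → ℂ ≃ᵃ[ℂ] ℂ, IsPowChain m n v ∧ ¬ Commute (v i) (v j) := by
  obtain ⟨c, hc, hc_ne⟩ := exists_units_pow_eq_one_ne_one hn
  obtain ⟨d, hd, hd_ne⟩ := exists_units_pow_eq_one_ne_one hm
  obtain ⟨f, hf, rfl⟩ := exists_isPowChain_apply_eq (m := m) (n := n) (by omega) (by omega) i c
  obtain ⟨g, hg, rfl⟩ := exists_isPowChain_apply_eq (m := m) (n := n) (by omega) (by omega) j d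
  refine ⟨_, (hf.map (AffineEquiv.homothetyUnitsMulHom (0 : ℂ))).splice
    (hg.map (AffineEquiv.homothetyUnitsMulHom (1 : ℂ))) hij ?_ ?_, fun hcomm => ?_⟩
  · rw [← map_pow, hc, map_one]
  · rw [← map_pow, hd, map_one]
  · simp only [le_refl, if_true, if_neg hij.not_ge, lt_irrefl, if_false] at hcomm
    exact (eq_one_or_eq_one_of_commute_homothety zero_ne_one hcomm).elim hc_ne hd_ne

theorem commutator_u0_u1_ne_one_general {m n : ℕ} (hm : 1 < m) (hn : 1 < n) {i j : ℤ}
    (hij : i ≠ j) :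
    ⁅(PresentedGroup.of i : PresentedGroup (powRels m n)), PresentedGroup.of j⁆ ≠
      (1 : PresentedGroup (powRels m n)) := by
  rw [Ne, commutatorElement_eq_one_iff_commute]
  intro hcomm
  wlog hlt : i < j generalizing i j
  · exact this hij.symm hcomm.symm (hij.symm.lt_of_le (not_lt.mp hlt))
  obtain ⟨v, hv, hv_comm⟩ := exists_isPowChain_not_commute hm hn hlt
  exact hv_comm (hv.commute_of_commute_of hcomm)

/-- In `A = ⟨ u_i (i ∈ ℤ) | u_{i+1}² = u_i³ ⟩` the commutator `[u₀, u₁]` is a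
nontrivial element. -/
theorem commutator_u0_u1_ne_one :
    ⁅(PresentedGroup.of (0 : ℤ) : AGroup), PresentedGroup.of (1 : ℤ)⁆ ≠ (1 : AGroup) :=
  commutator_u0_u1_ne_one_general (m := 2) (n := 3) (by norm_num) (by norm_num) zero_ne_one
end

section
/- Let G = ⟨x, y | x y² x⁻¹ = y³⟩. Let W be any subset of the free group F(a,b) on two generators such that every w ∈ W becomes trivial in G when evaluated at a = y⁴ and b = x y⁴ x⁻¹. Let Ḡ = ⟨ x, z | w(z, x z x⁻¹) = 1 for all w ∈ W ⟩ and let L be the kernel of the epimorphism Ḡ → G induced by x ↦ x, z ↦ y⁴. Then L is not perfect; that is, the abelianization L/[L,L] is nonzero. -/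
/-- Substitution `F(a,b) → F(x,z)`, `a ↦ z`, `b ↦ x z x⁻¹`, sending a word
`w = w(a,b)` to `w(z, x z x⁻¹)` (generator `0` of the target plays the role of
`x`, generator `1` the role of `z`). -/
def substitution : FreeGroup (Fin 2) →* FreeGroup (Fin 2) :=
  FreeGroup.lift (fun i => if i = 0 then FreeGroup.of 1
    else FreeGroup.of 0 * FreeGroup.of 1 * (FreeGroup.of 0)⁻¹)

/-- Evaluation `F(a,b) → G` at `a = y⁴`, `b = x y⁴ x⁻¹`. -/
def evalInG : FreeGroup (Fin 2) →* BSGroup :=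
  FreeGroup.lift (fun i => if i = 0 then bsY ^ 4 else bsX * bsY ^ 4 * bsX⁻¹)

/-!
The endomorphism `σ` of `G` fixing `x` and sending `y` to `y²` maps `⟨y⟩` injectively into itself,
because `y` has infinite order. Since `x y² x⁻¹ = y³`, the values of `w(y², x y² x⁻¹)` lie in `⟨y⟩`,
and `σ` maps them to `w(y⁴, x y⁴ x⁻¹)`. So the relations `w ∈ W` already hold for `z = y²`, and
`Ḡ → G` factors as an epimorphism `Ḡ → G` followed by `σ`. Hence `L` maps onto `ker σ`, which
contains `c = [y, x y x⁻¹]`, and it suffices to find a homomorphism from `G` to a solvable group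
that does not kill `c`: a perfect group has no nontrivial solvable image.

To find one, start from the action of `G` on `ℚ` with `x` and `y` acting by `q ↦ 3q/2` and
`q ↦ q + 1`. In the wreath product of a group of order two with the affine group of `ℚ` the image
of `x` may be multiplied by any element `u` commuting with the image of `y³`. Taking for `u` the
indicator function of the subgroup generated by the image of `y³` makes the images of `y` and
`x y x⁻¹` stop commuting, because the translation by `3/2` is not a power of the translation by `1`.
-/

open SemidirectProduct
open scoped commutatorElement

instance isSolvable_semidirectProduct {N Q : Type*} [Group N] [Group Q] (φ : Q →* MulAut N)
    [Group.IsSolvable N] [Group.IsSolvable Q] : Group.IsSolvable (N ⋊[φ] Q) :=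
  Group.isSolvable_of_ker_le_range inl rightHom range_inl_eq_ker_rightHom.ge

theorem commute_inl_inr_of_map_eq {N Q : Type*} [Group N] [Group Q] {φ : Q →* MulAut N} {n : N}
    {q : Q} (h : φ q n = n) : Commute (inl n : N ⋊[φ] Q) (inr q) := by
  have conj_eq : (inl n : N ⋊[φ] Q) = inr q * inl n * (inr q)⁻¹ := by rw [← map_inv, ← inl_aut, h]
  exact eq_mul_inv_iff_mul_eq.1 conj_eq

theorem nontrivial_abelianization_of_surjective {L H : Type*} [Group L] [Group H]
    [Group.IsSolvable H] [Nontrivial H] {f : L →* H} (hf : Function.Surjective f) :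
    Nontrivial (Abelianization L) := by
  have : Nontrivial (Abelianization H) :=
    QuotientGroup.nontrivial_iff.2 (Group.IsSolvable.commutator_lt_top_of_nontrivial H).ne
  have map_surjective : Function.Surjective (Abelianization.map f) := by
    intro a
    obtain ⟨h, rfl⟩ := QuotientGroup.mk_surjective a
    obtain ⟨l, rfl⟩ := hf h
    exact ⟨Abelianization.of l, Abelianization.map_of f l⟩
  exact map_surjective.nontrivial

theorem nontrivial_abelianization_of_map_ne_one {L H : Type*} [Group L] [Group H]
    [Group.IsSolvable H] (f : L →* H) {l : L} (hl : f l ≠ 1) : Nontrivial (Abelianization L) := by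
  have : Nontrivial f.range := ⟨f.rangeRestrict l, 1, fun h => hl (congrArg Subtype.val h)⟩
  exact nontrivial_abelianization_of_surjective f.rangeRestrict_surjective

section SubgroupSign

variable {Q : Type*} [Group Q]

theorem mulAutArrow_regular_apply {M : Type*} [Monoid M] (g : Q) (f : Q → M) (q : Q) :
    mulAutArrow g f q = f (g⁻¹ * q) :=
  rfl

open Classical in
/-- The indicator function of a subgroup `S` of `Q`, with values `-1` on `S` and `1` elsewhere.
It is used as an element of the base group of the regular wreath product of `ℤˣ` and `Q`, which is
encoded as the semidirect product `(Q → ℤˣ) ⋊[mulAutArrow] Q`. -/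
noncomputable def subgroupSign (S : Subgroup Q) : Q → ℤˣ :=
  fun q => if q ∈ S then -1 else 1

theorem subgroupSign_of_mem {S : Subgroup Q} {q : Q} (hq : q ∈ S) : subgroupSign S q = -1 :=
  if_pos hq

theorem subgroupSign_of_notMem {S : Subgroup Q} {q : Q} (hq : q ∉ S) : subgroupSign S q = 1 :=
  if_neg hq

theorem mulAutArrow_subgroupSign {S : Subgroup Q} {h : Q} (hh : h ∈ S) :
    mulAutArrow h (subgroupSign S) = subgroupSign S := by
  funext q
  have mem_iff : h⁻¹ * q ∈ S ↔ q ∈ S := S.mul_mem_cancel_left (S.inv_mem hh)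
  rw [mulAutArrow_regular_apply]
  by_cases hq : q ∈ S
  · rw [subgroupSign_of_mem (mem_iff.2 hq), subgroupSign_of_mem hq]
  · rw [subgroupSign_of_notMem (mem_iff.not.2 hq), subgroupSign_of_notMem hq]

theorem not_commute_inr_conj_inl_subgroupSign {S : Subgroup Q} {q r : Q} (hq : q ∉ S) (hr : r ∉ S)
    (hqr : q * r ∉ S) :
    ¬ Commute (inr q : (Q → ℤˣ) ⋊[mulAutArrow] Q)
      (inl (subgroupSign S) * inr r * (inl (subgroupSign S))⁻¹) := by
  intro hcomm
  have left_eq := congrFun (congrArg SemidirectProduct.left hcomm.eq) 1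
  have at_one : subgroupSign S q⁻¹ * subgroupSign S (q * r)⁻¹ =
      subgroupSign S 1 * subgroupSign S r⁻¹ := by
    simpa [-mulAutArrow_apply_apply, mulAutArrow_regular_apply] using left_eq
  rw [subgroupSign_of_notMem (inv_mem_iff.not.2 hq), subgroupSign_of_notMem (inv_mem_iff.not.2 hqr),
    subgroupSign_of_notMem (inv_mem_iff.not.2 hr), subgroupSign_of_mem S.one_mem] at at_one
  exact absurd at_one (by decide)

end SubgroupSign

section Relation

variable {H : Type*} [Group H] {a b : H}

theorem conj_notMem_zpowers (h : a * b ^ 2 * a⁻¹ = b ^ 3) (hb : ¬ IsOfFinOrder b) :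
    a * b * a⁻¹ ∉ Subgroup.zpowers b := by
  rintro ⟨k, hk : b ^ k = a * b * a⁻¹⟩
  have pow_eq : b ^ (k * 2) = b ^ (3 : ℤ) := by
    rw [zpow_mul, hk]
    exact_mod_cast conj_pow.trans h
  have := injective_zpow_iff_not_isOfFinOrder.2 hb pow_eq
  omega

theorem notMem_zpowers_pow (hb : ¬ IsOfFinOrder b) {n : ℕ} (hn : n ≠ 1) :
    b ∉ Subgroup.zpowers (b ^ n) := by
  rintro ⟨k, hk : (b ^ n) ^ k = b⟩
  have pow_eq : b ^ (n * k : ℤ) = b ^ (1 : ℤ) := by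
    rw [zpow_mul, zpow_natCast, zpow_one, hk]
  have mul_eq_one : (n * k : ℤ) = 1 := injective_zpow_iff_not_isOfFinOrder.2 hb pow_eq
  exact hn (Nat.dvd_one.1 (by exact_mod_cast Dvd.intro k mul_eq_one))

theorem conj_sq_eq_cube_mul_left (h : a * b ^ 2 * a⁻¹ = b ^ 3) {u : H} (hu : Commute u (b ^ 3)) :
    u * a * b ^ 2 * (u * a)⁻¹ = b ^ 3 := by
  calc u * a * b ^ 2 * (u * a)⁻¹ = u * (a * b ^ 2 * a⁻¹) * u⁻¹ := by group
    _ = b ^ 3 := by rw [h, hu.eq, mul_inv_cancel_right]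

theorem conj_sq_eq_cube_sq (h : a * b ^ 2 * a⁻¹ = b ^ 3) :
    a * (b ^ 2) ^ 2 * a⁻¹ = (b ^ 2) ^ 3 := by
  rw [← conj_pow, h, ← pow_mul, ← pow_mul]

end Relation

/-- The group of affine maps `q ↦ c q + d` of a commutative ring `K`, as the semidirect product of
the translations by `K` and the homotheties by `Kˣ`. -/
abbrev AffineGroup (K : Type*) [CommRing K] : Type _ :=
  Multiplicative K
    ⋊[(MulAutMultiplicative K).symm.toMonoidHom.comp (DistribMulAction.toAddAut Kˣ K)] Kˣ

namespace AffineGroup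

variable {K : Type*} [CommRing K]

/-- The affine map `q ↦ q + d`. -/
def translation (d : K) : AffineGroup K :=
  inl (Multiplicative.ofAdd d)

theorem translation_pow (d : K) (n : ℕ) : translation d ^ n = translation (n * d) := by
  rw [translation, translation, ← map_pow, ← ofAdd_nsmul, nsmul_eq_mul]

theorem inr_mul_translation_mul_inv (c : Kˣ) (d : K) :
    inr c * translation d * (inr c)⁻¹ = translation (c * d) := by
  rw [← map_inv]
  exact (inl_aut c (Multiplicative.ofAdd d)).symm

theorem not_isOfFinOrder_translation [IsAddTorsionFree K] {d : K} (hd : d ≠ 0) :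
    ¬ IsOfFinOrder (translation d) := by
  rw [translation, inl_injective.isOfFinOrder_iff, isOfFinOrder_ofAdd_iff]
  exact not_isOfFinAddOrder_of_isAddTorsionFree hd

end AffineGroup

namespace BSGroup

theorem bsX_mul_bsY_sq_mul_inv : bsX * bsY ^ 2 * bsX⁻¹ = bsY ^ 3 := by
  have relator_eq_one := PresentedGroup.one_of_mem (rels := bsRels) rfl
  simp only [map_mul, map_pow, map_inv] at relator_eq_one
  exact mul_inv_eq_one.1 relator_eq_one

theorem map_bsX_mul_map_bsY_sq_mul_inv {H : Type*} [Group H] (f : BSGroup →* H) :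
    f bsX * f bsY ^ 2 * (f bsX)⁻¹ = f bsY ^ 3 := by
  simp only [← map_pow, ← map_mul, ← map_inv, bsX_mul_bsY_sq_mul_inv]

theorem eq_top_of_bsX_mem_of_bsY_sq_mem {S : Subgroup BSGroup} (hx : bsX ∈ S)
    (hy : bsY ^ 2 ∈ S) : S = ⊤ := by
  have hy' : bsY ∈ S := by
    have : bsY = bsX * bsY ^ 2 * bsX⁻¹ * (bsY ^ 2)⁻¹ := by rw [bsX_mul_bsY_sq_mul_inv]; group
    rw [this]
    exact S.mul_mem (S.mul_mem (S.mul_mem hx hy) (S.inv_mem hx)) (S.inv_mem hy)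
  rw [eq_top_iff, ← PresentedGroup.closure_range_of, Subgroup.closure_le]
  rintro _ ⟨i, rfl⟩
  fin_cases i
  exacts [hx, hy']

section Lift

variable {H : Type*} [Group H] {a b : H}

/-- The homomorphism `x ↦ a`, `y ↦ b` given by the universal property of the presentation. -/
def lift (h : a * b ^ 2 * a⁻¹ = b ^ 3) : BSGroup →* H :=
  PresentedGroup.toGroup (f := ![a, b]) (by rintro _ rfl; simp [h])

@[simp]
theorem lift_bsX (h : a * b ^ 2 * a⁻¹ = b ^ 3) : lift h bsX = a :=
  PresentedGroup.toGroup.of _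

@[simp]
theorem lift_bsY (h : a * b ^ 2 * a⁻¹ = b ^ 3) : lift h bsY = b :=
  PresentedGroup.toGroup.of _

end Lift

/-- The action on `ℚ` in which `x` and `y` act by `q ↦ 3 / 2 * q` and `q ↦ q + 1`. -/
noncomputable def affineHom : BSGroup →* AffineGroup ℚ :=
  lift (a := inr (Units.mk0 (3 / 2) (by norm_num))) (b := AffineGroup.translation 1) (by
    simp only [AffineGroup.translation_pow, AffineGroup.inr_mul_translation_mul_inv]
    norm_num)

theorem not_isOfFinOrder_affineHom_bsY : ¬ IsOfFinOrder (affineHom bsY) := by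
  rw [affineHom, lift_bsY]
  exact AffineGroup.not_isOfFinOrder_translation one_ne_zero

theorem not_isOfFinOrder_bsY : ¬ IsOfFinOrder bsY :=
  mt affineHom.isOfFinOrder not_isOfFinOrder_affineHom_bsY

section TwistedHom

variable {Q : Type*} [Group Q]

/-- The lift of `f : BSGroup →* Q` to the regular wreath product of `ℤˣ` and `Q` in which the image
of `x` is twisted by the indicator function of the subgroup generated by `f (y ^ 3)`. -/
noncomputable def twistedHom (f : BSGroup →* Q) : BSGroup →* (Q → ℤˣ) ⋊[mulAutArrow] Q :=
  lift (a := inl (subgroupSign (.zpowers (f bsY ^ 3))) * inr (f bsX)) (b := inr (f bsY)) <| by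
    refine conj_sq_eq_cube_mul_left (map_bsX_mul_map_bsY_sq_mul_inv (inr.comp f)) ?_
    rw [MonoidHom.comp_apply, ← map_pow inr]
    exact commute_inl_inr_of_map_eq (mulAutArrow_subgroupSign (Subgroup.mem_zpowers _))

theorem twistedHom_commutator_ne_one {f : BSGroup →* Q} (hf : ¬ IsOfFinOrder (f bsY)) :
    twistedHom f ⁅bsY, bsX * bsY * bsX⁻¹⁆ ≠ 1 := by
  set u : (Q → ℤˣ) ⋊[mulAutArrow] Q := inl (subgroupSign (.zpowers (f bsY ^ 3)))
  have map_conj : twistedHom f (bsX * bsY * bsX⁻¹) = u * inr (f (bsX * bsY * bsX⁻¹)) * u⁻¹ := by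
    simp only [map_mul, map_inv, twistedHom, lift_bsX, lift_bsY, u]
    group
  have conj_notMem : f (bsX * bsY * bsX⁻¹) ∉ Subgroup.zpowers (f bsY) := by
    simp only [map_mul, map_inv]
    exact conj_notMem_zpowers (map_bsX_mul_map_bsY_sq_mul_inv f) hf
  have zpowers_cube_le : Subgroup.zpowers (f bsY ^ 3) ≤ Subgroup.zpowers (f bsY) :=
    Subgroup.zpowers_le.2 (Subgroup.npow_mem_zpowers _ 3)
  rw [map_commutatorElement, map_conj, twistedHom, lift_bsY, Ne,
    commutatorElement_eq_one_iff_commute]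
  refine not_commute_inr_conj_inl_subgroupSign (notMem_zpowers_pow hf (by decide))
    (fun h => conj_notMem (zpowers_cube_le h)) fun h => conj_notMem ?_
  exact (Subgroup.mul_mem_cancel_left _ (Subgroup.mem_zpowers _)).1 (zpowers_cube_le h)

end TwistedHom

/-- The endomorphism `x ↦ x`, `y ↦ y ^ 2` witnessing that the group is not Hopfian. -/
def squaring : BSGroup →* BSGroup :=
  lift (conj_sq_eq_cube_sq bsX_mul_bsY_sq_mul_inv)

@[simp]
theorem squaring_bsX : squaring bsX = bsX :=
  lift_bsX _

@[simp]
theorem squaring_bsY : squaring bsY = bsY ^ 2 :=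
  lift_bsY _

theorem squaring_surjective : Function.Surjective squaring :=
  MonoidHom.range_eq_top.1 <|
    eq_top_of_bsX_mem_of_bsY_sq_mem ⟨bsX, squaring_bsX⟩ ⟨bsY, squaring_bsY⟩

theorem squaring_commutator : squaring ⁅bsY, bsX * bsY * bsX⁻¹⁆ = 1 := by
  rw [map_commutatorElement, map_mul, map_mul, map_inv, squaring_bsX, squaring_bsY,
    bsX_mul_bsY_sq_mul_inv, commutatorElement_eq_one_iff_commute]
  exact Commute.pow_pow_self bsY 2 3

theorem eq_one_of_mem_zpowers_of_squaring_eq_one {g : BSGroup} (hg : g ∈ Subgroup.zpowers bsY)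
    (hg' : squaring g = 1) : g = 1 := by
  obtain ⟨k, rfl⟩ := hg
  have pow_eq : bsY ^ (2 * k) = bsY ^ (0 : ℤ) := by
    simpa [zpow_mul] using hg'
  have := injective_zpow_iff_not_isOfFinOrder.2 not_isOfFinOrder_bsY pow_eq
  obtain rfl : k = 0 := by omega
  exact zpow_zero bsY

theorem evalInG_eq_squaring_comp :
    evalInG = squaring.comp ((FreeGroup.lift ![bsX, bsY ^ 2]).comp substitution) := by
  ext i
  fin_cases i <;> simp [evalInG, substitution, ← pow_mul]

theorem lift_comp_substitution :
    (FreeGroup.lift ![bsX, bsY ^ 2]).comp substitution = FreeGroup.lift ![bsY ^ 2, bsY ^ 3] := by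
  ext i
  fin_cases i <;> simp [substitution, bsX_mul_bsY_sq_mul_inv]

theorem lift_substitution_mem_zpowers (w : FreeGroup (Fin 2)) :
    FreeGroup.lift ![bsX, bsY ^ 2] (substitution w) ∈ Subgroup.zpowers bsY := by
  rw [← MonoidHom.comp_apply, lift_comp_substitution]
  refine FreeGroup.range_lift_le (Set.range_subset_iff.2 (Fin.forall_fin_two.2 ⟨?_, ?_⟩)) ⟨w, rfl⟩
  exacts [Subgroup.npow_mem_zpowers bsY 2, Subgroup.npow_mem_zpowers bsY 3]

theorem lift_substitution_eq_one {w : FreeGroup (Fin 2)} (hw : evalInG w = 1) :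
    FreeGroup.lift ![bsX, bsY ^ 2] (substitution w) = 1 := by
  rw [evalInG_eq_squaring_comp] at hw
  exact eq_one_of_mem_zpowers_of_squaring_eq_one (lift_substitution_mem_zpowers w) hw

theorem exists_surjective_hom_of_evalInG_eq_one {W : Set (FreeGroup (Fin 2))}
    (hW : ∀ w ∈ W, evalInG w = 1) :
    ∃ ψ : PresentedGroup (substitution '' W) →* BSGroup, Function.Surjective ψ ∧
      ψ (PresentedGroup.of 0) = bsX ∧ ψ (PresentedGroup.of 1) = bsY ^ 2 := by
  have relations_hold : ∀ r ∈ substitution '' W, FreeGroup.lift ![bsX, bsY ^ 2] r = 1 :=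
    Set.forall_mem_image.2 fun w hw => lift_substitution_eq_one (hW w hw)
  let ψ := PresentedGroup.toGroup relations_hold
  have ψ_x : ψ (PresentedGroup.of 0) = bsX := PresentedGroup.toGroup.of _
  have ψ_z : ψ (PresentedGroup.of 1) = bsY ^ 2 := PresentedGroup.toGroup.of _
  exact ⟨ψ, MonoidHom.range_eq_top.1 (eq_top_of_bsX_mem_of_bsY_sq_mem ⟨_, ψ_x⟩ ⟨_, ψ_z⟩), ψ_x, ψ_z⟩

theorem nontrivial_abelianization_ker_squaring_comp {P : Type*} [Group P] {ψ : P →* BSGroup}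
    (hψ : Function.Surjective ψ) : Nontrivial (Abelianization (squaring.comp ψ).ker) := by
  obtain ⟨c, hc⟩ := hψ ⁅bsY, bsX * bsY * bsX⁻¹⁆
  have c_mem : c ∈ (squaring.comp ψ).ker := by
    rw [MonoidHom.mem_ker, MonoidHom.comp_apply, hc, squaring_commutator]
  refine nontrivial_abelianization_of_map_ne_one
    (((twistedHom affineHom).comp ψ).comp (squaring.comp ψ).ker.subtype) (l := ⟨c, c_mem⟩) ?_
  simpa [hc] using twistedHom_commutator_ne_one not_isOfFinOrder_affineHom_bsY

end BSGroup

/-- Let `W ⊆ F(a,b)` be any set of relations among `z = y⁴` and `x z x⁻¹`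
holding in `G = ⟨x, y | x y² x⁻¹ = y³⟩`.  Then the assignment `x ↦ x`,
`z ↦ y⁴` induces a (unique) epimorphism
`Ḡ = ⟨x, z | w(z, x z x⁻¹) = 1 (w ∈ W)⟩ → G`, and its kernel `L` is not
perfect: the abelianization `L/[L,L]` is nonzero. -/
theorem kernel_not_perfect (W : Set (FreeGroup (Fin 2)))
    (hW : ∀ w ∈ W, evalInG w = 1) :
    (∃ φ : PresentedGroup (substitution '' W) →* BSGroup,
        φ (PresentedGroup.of 0) = bsX ∧ φ (PresentedGroup.of 1) = bsY ^ 4) ∧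
    ∀ φ : PresentedGroup (substitution '' W) →* BSGroup,
      φ (PresentedGroup.of 0) = bsX → φ (PresentedGroup.of 1) = bsY ^ 4 →
      Function.Surjective φ ∧ Nontrivial (Abelianization ↥φ.ker) := by
  obtain ⟨ψ, ψ_surjective, ψ_x, ψ_z⟩ := BSGroup.exists_surjective_hom_of_evalInG_eq_one hW
  have comp_x : BSGroup.squaring.comp ψ (PresentedGroup.of 0) = bsX := by simp [ψ_x]
  have comp_z : BSGroup.squaring.comp ψ (PresentedGroup.of 1) = bsY ^ 4 := by
    simp [ψ_z, ← pow_mul]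
  refine ⟨⟨BSGroup.squaring.comp ψ, comp_x, comp_z⟩, fun φ hx hz => ?_⟩
  obtain rfl : φ = BSGroup.squaring.comp ψ :=
    PresentedGroup.ext (Fin.forall_fin_two.2 ⟨hx.trans comp_x.symm, hz.trans comp_z.symm⟩)
  exact ⟨BSGroup.squaring_surjective.comp ψ_surjective,
    BSGroup.nontrivial_abelianization_ker_squaring_comp ψ_surjective⟩
end

section
/- Let F = F(a,b) be the free group on two generators, let c = a b a⁻¹ b⁻¹, d = a⁻³ b², and e = a⁻¹ (b a⁻¹)². Let φ : F → ℤ be the homomorphism with φ(a) = 2 and φ(b) = 3. Then for every subset S ⊆ ker φ, the normal closure of S ∪ {c, d} in F equals the normal closure of {e} in F. -/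
/-- `c = a b a⁻¹ b⁻¹` in the free group on two generators `a = 0`, `b = 1`. -/
def wordC : FreeGroup (Fin 2) :=
  FreeGroup.of 0 * FreeGroup.of 1 * (FreeGroup.of 0)⁻¹ * (FreeGroup.of 1)⁻¹

/-- `d = a⁻³ b²`. -/
def wordD : FreeGroup (Fin 2) := (FreeGroup.of 0 ^ 3)⁻¹ * FreeGroup.of 1 ^ 2

/-- `e = a⁻¹ (b a⁻¹)²`. -/
def wordE : FreeGroup (Fin 2) :=
  (FreeGroup.of 0)⁻¹ * (FreeGroup.of 1 * (FreeGroup.of 0)⁻¹) ^ 2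

/-- The homomorphism `φ : F(a,b) → ℤ` with `φ(a) = 2`, `φ(b) = 3`
(written multiplicatively). -/
def phiTo2and3 : FreeGroup (Fin 2) →* Multiplicative ℤ :=
  FreeGroup.lift (fun i => Multiplicative.ofAdd (if i = 0 then (2 : ℤ) else 3))

/-!
Both normal closures are `ker φ`. Modulo `e`, the element `t = b a⁻¹` satisfies `t ^ 2 = a` and
`t ^ 3 = b`, so the quotient map factors through `φ` as `n ↦ t ^ n` and hence kills `ker φ`.
Modulo `c` and `d`, the generators commute and satisfy `a ^ 3 = b ^ 2`, so `e = a⁻³ b² = 1`.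
-/

section Hom

variable {G : Type*} [Group G] (f : FreeGroup (Fin 2) →* G)

theorem map_wordC_eq_one_iff :
    f wordC = 1 ↔ Commute (f (FreeGroup.of 0)) (f (FreeGroup.of 1)) := by
  simp only [wordC, map_mul, map_inv, mul_inv_eq_iff_eq_mul, one_mul, commute_iff_eq]

theorem map_wordD_eq_one_iff :
    f wordD = 1 ↔ f (FreeGroup.of 0) ^ 3 = f (FreeGroup.of 1) ^ 2 := by
  simp only [wordD, map_mul, map_inv, map_pow, inv_mul_eq_one]

theorem map_wordE_eq_one_iff :
    f wordE = 1 ↔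
      f (FreeGroup.of 0) = (f (FreeGroup.of 1) * (f (FreeGroup.of 0))⁻¹) ^ 2 := by
  simp only [wordE, map_mul, map_inv, map_pow, inv_mul_eq_one]

variable {f}

theorem map_wordE_eq_one_of_map_wordC_of_map_wordD (hC : f wordC = 1) (hD : f wordD = 1) :
    f wordE = 1 := by
  rw [map_wordC_eq_one_iff] at hC
  rw [map_wordD_eq_one_iff] at hD
  rw [map_wordE_eq_one_iff, hC.symm.inv_right.mul_pow, ← hD]
  group

theorem zpowersHom_comp_phiTo2and3_of_map_wordE_eq_one (hE : f wordE = 1) :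
    (zpowersHom G (f (FreeGroup.of 1) * (f (FreeGroup.of 0))⁻¹)).comp phiTo2and3 = f := by
  rw [map_wordE_eq_one_iff] at hE
  set a := f (FreeGroup.of 0)
  set b := f (FreeGroup.of 1)
  have cube_eq : (b * a⁻¹) ^ 3 = b := by
    rw [pow_succ', ← hE, inv_mul_cancel_right]
  ext i
  fin_cases i
  · simpa [phiTo2and3] using hE.symm
  · simpa [phiTo2and3] using cube_eq

theorem ker_phiTo2and3_le_ker_of_map_wordE_eq_one (hE : f wordE = 1) :
    phiTo2and3.ker ≤ f.ker := by
  intro x hx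
  rw [MonoidHom.mem_ker] at hx ⊢
  rw [← zpowersHom_comp_phiTo2and3_of_map_wordE_eq_one hE, MonoidHom.comp_apply, hx, map_one]

end Hom

section Normal

variable {N : Subgroup (FreeGroup (Fin 2))} [N.Normal]

theorem wordE_mem_of_wordC_mem_of_wordD_mem (hC : wordC ∈ N) (hD : wordD ∈ N) : wordE ∈ N := by
  rw [← QuotientGroup.ker_mk' N] at hC hD ⊢
  exact map_wordE_eq_one_of_map_wordC_of_map_wordD hC hD

theorem ker_phiTo2and3_le_of_wordE_mem (hE : wordE ∈ N) : phiTo2and3.ker ≤ N := by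
  rw [← QuotientGroup.ker_mk' N] at hE ⊢
  exact ker_phiTo2and3_le_ker_of_map_wordE_eq_one hE

end Normal

theorem wordC_mem_ker_phiTo2and3 : wordC ∈ phiTo2and3.ker :=
  (map_wordC_eq_one_iff phiTo2and3).2 (Commute.all _ _)

theorem wordD_mem_ker_phiTo2and3 : wordD ∈ phiTo2and3.ker :=
  (map_wordD_eq_one_iff phiTo2and3).2 (by simp [phiTo2and3, ← ofAdd_nsmul])

theorem normalClosure_wordE_eq_ker_phiTo2and3 :
    Subgroup.normalClosure {wordE} = phiTo2and3.ker := by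
  apply le_antisymm
  · rw [← Subgroup.normalClosure_subset_iff, Set.singleton_subset_iff]
    exact wordE_mem_of_wordC_mem_of_wordD_mem wordC_mem_ker_phiTo2and3 wordD_mem_ker_phiTo2and3
  · exact ker_phiTo2and3_le_of_wordE_mem (Subgroup.subset_normalClosure rfl)

/-- For every set `S` of words in the kernel of `φ : F(a,b) → ℤ`, `a ↦ 2`,
`b ↦ 3`, the normal closure of `S ∪ {c, d}` equals the normal closure of `{e}`,
where `c = a b a⁻¹ b⁻¹`, `d = a⁻³ b²` and `e = a⁻¹ (b a⁻¹)²`. -/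
theorem normalClosure_union_cd_eq_normalClosure_e
    (S : Set (FreeGroup (Fin 2))) (hS : S ⊆ (phiTo2and3.ker : Set (FreeGroup (Fin 2)))) :
    Subgroup.normalClosure (S ∪ {wordC, wordD}) = Subgroup.normalClosure {wordE} := by
  rw [normalClosure_wordE_eq_ker_phiTo2and3]
  apply le_antisymm
  · apply Subgroup.normalClosure_le_normal
    exact Set.union_subset hS
      (Set.pair_subset wordC_mem_ker_phiTo2and3 wordD_mem_ker_phiTo2and3)
  · have hC : wordC ∈ Subgroup.normalClosure (S ∪ {wordC, wordD}) :=
      Subgroup.subset_normalClosure (by simp)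
    have hD : wordD ∈ Subgroup.normalClosure (S ∪ {wordC, wordD}) :=
      Subgroup.subset_normalClosure (by simp)
    exact ker_phiTo2and3_le_of_wordE_mem (wordE_mem_of_wordC_mem_of_wordD_mem hC hD)
end

section
/- Let F be the free group on a family x, let R be a normal subgroup of F, and set G = F/R. Suppose s is a subset of R such that the images {s[R,R] : s ∈ s} generate the relation module M(G,x) = R/[R,R] as a ℤG-module. Let S be the normal closure of s in F and let G̃ = F/S, so that there is a natural epimorphism G̃ → G with kernel P = R/S. Then P is perfect, i.e., P/[P,P] = 0. -/
/-!
The image of `⟪s⟫ ∩ R` in `R/[R,R]` is stable under conjugation, hence a `ℤG`-submodule; it contains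
the generators coming from `s`, so it is everything, that is, `R = ⟪s⟫[R,R]`. Applying the
projection `F → F/⟪s⟫`, which kills `⟪s⟫` and maps `R` onto `P`, gives `P = [P,P]`.
-/

section Perfect

variable {F H : Type*} [Group F] [Group H]

theorem isPerfect_map_of_le_sup_commutator {N R : Subgroup F} (hR : R ≤ N ⊔ ⁅R, R⁆)
    {f : F →* H} (hN : N ≤ f.ker) : Group.IsPerfect (R.map f) := by
  refine (R.map f).isPerfect_iff.2 (le_antisymm (R.map f).commutator_le_self ?_)
  calc
    R.map f ≤ (N ⊔ ⁅R, R⁆).map f := Subgroup.map_mono hR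
    _ = ⁅R.map f, R.map f⁆ := by
      rw [Subgroup.map_sup, (Subgroup.map_eq_bot_iff N).2 hN, bot_sup_eq, Subgroup.map_commutator]

theorem le_sup_commutator_of_map_abelianization_eq_top {N R : Subgroup F}
    (h : (N.subgroupOf R).map Abelianization.of = ⊤) : R ≤ N ⊔ ⁅R, R⁆ := by
  have hsup : N.subgroupOf R ⊔ commutator R = ⊤ := by
    rw [← Abelianization.ker_of, ← Subgroup.comap_map_eq, h, Subgroup.comap_top]
  calc
    R = (N.subgroupOf R ⊔ commutator R).map R.subtype := by
      rw [hsup, ← MonoidHom.range_eq_map, Subgroup.range_subtype]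
    _ = N ⊓ R ⊔ ⁅R, R⁆ := by
      rw [Subgroup.map_sup, Subgroup.subgroupOf_map_subtype, Subgroup.map_subtype_commutator]
    _ ≤ N ⊔ ⁅R, R⁆ := sup_le_sup_right inf_le_left _

theorem ker_eq_map_mk'_of_apply_mk {N R : Subgroup F} [N.Normal] [R.Normal]
    {φ : F ⧸ N →* F ⧸ R} (hφ : ∀ w : F, φ (QuotientGroup.mk w) = QuotientGroup.mk w) :
    φ.ker = R.map (QuotientGroup.mk' N) := by
  have hcomp : φ.comp (QuotientGroup.mk' N) = QuotientGroup.mk' R := MonoidHom.ext hφ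
  rw [← Subgroup.map_comap_eq_self_of_surjective (QuotientGroup.mk'_surjective N) φ.ker,
    MonoidHom.comap_ker, hcomp, QuotientGroup.ker_mk']

end Perfect

section RelationModule

variable {F : Type*} [Group F] {R : Subgroup F} [R.Normal]
  [Module (MonoidAlgebra ℤ (F ⧸ R)) (Additive (Abelianization R))]

/-- The image of `N ∩ R` in the relation module `R/[R,R]`, as a `ℤ[F/R]`-submodule. The module
structure is an arbitrary instance, tied to conjugation in `F` by the hypothesis `hact`. -/
def relationSubmodule
    (hact : ∀ (f : F) (r r' : R), (r' : F) = f * r * f⁻¹ →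
      MonoidAlgebra.of ℤ (F ⧸ R) (QuotientGroup.mk f) • Additive.ofMul (Abelianization.of r) =
        Additive.ofMul (Abelianization.of r'))
    (N : Subgroup F) [N.Normal] :
    Submodule (MonoidAlgebra ℤ (F ⧸ R)) (Additive (Abelianization R)) :=
  MonoidAlgebra.submoduleOfSMulMem
    (AddSubgroup.toIntSubmodule ((N.subgroupOf R).map Abelianization.of).toAddSubgroup) <| by
    rintro g _ ⟨r, hr, rfl⟩
    obtain ⟨f, rfl⟩ := QuotientGroup.mk_surjective g
    have hconj : f * r * f⁻¹ ∈ R := Subgroup.Normal.conj_mem ‹R.Normal› r r.2 f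
    exact ⟨⟨f * r * f⁻¹, hconj⟩, Subgroup.Normal.conj_mem ‹N.Normal› r hr f,
      (hact f r ⟨_, hconj⟩ rfl).symm⟩

theorem map_abelianization_normalClosure_eq_top {s : Set F}
    (hact : ∀ (f : F) (r r' : R), (r' : F) = f * r * f⁻¹ →
      MonoidAlgebra.of ℤ (F ⧸ R) (QuotientGroup.mk f) • Additive.ofMul (Abelianization.of r) =
        Additive.ofMul (Abelianization.of r'))
    (hgen : Submodule.span (MonoidAlgebra ℤ (F ⧸ R))
      {m : Additive (Abelianization R) | ∃ w : R, (w : F) ∈ s ∧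
        m = Additive.ofMul (Abelianization.of w)} = ⊤) :
    ((Subgroup.normalClosure s).subgroupOf R).map Abelianization.of = ⊤ := by
  have htop : ⊤ ≤ relationSubmodule hact (Subgroup.normalClosure s) := by
    rw [← hgen, Submodule.span_le]
    rintro _ ⟨w, hw, rfl⟩
    exact ⟨w, Subgroup.subset_normalClosure hw, rfl⟩
  exact eq_top_iff.2 fun m _ ↦ htop (Submodule.mem_top (x := Additive.ofMul m))

theorem kernel_of_natural_epimorphism_is_perfect_general {s : Set F}
    (hact : ∀ (f : F) (r r' : R), (r' : F) = f * r * f⁻¹ →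
      MonoidAlgebra.of ℤ (F ⧸ R) (QuotientGroup.mk f) • Additive.ofMul (Abelianization.of r) =
        Additive.ofMul (Abelianization.of r'))
    (hgen : Submodule.span (MonoidAlgebra ℤ (F ⧸ R))
      {m : Additive (Abelianization R) | ∃ w : R, (w : F) ∈ s ∧
        m = Additive.ofMul (Abelianization.of w)} = ⊤)
    {φ : F ⧸ Subgroup.normalClosure s →* F ⧸ R}
    (hφ : ∀ w : F, φ (QuotientGroup.mk w) = QuotientGroup.mk w) :
    Group.IsPerfect φ.ker := by
  have hR : R ≤ Subgroup.normalClosure s ⊔ ⁅R, R⁆ :=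
    le_sup_commutator_of_map_abelianization_eq_top
      (map_abelianization_normalClosure_eq_top hact hgen)
  rw [ker_eq_map_mk'_of_apply_mk hφ]
  exact isPerfect_map_of_le_sup_commutator hR (QuotientGroup.ker_mk' _).ge

end RelationModule

/-- Let `F` be a free group, `R ⊴ F` normal, `G = F/R`.  Suppose `s ⊆ R` is a
set whose images `s[R,R]` generate the relation module `M(G,x) = R/[R,R]`
(over `ℤG`, with `G` acting by conjugation).  Let `G̃ = F / ⟪s⟫` and let
`φ : G̃ → G` be the natural epimorphism.  Then its kernel `P = R/⟪s⟫` is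
perfect, i.e. `P/[P,P] = 0`. -/
theorem kernel_of_natural_epimorphism_is_perfect
    {α : Type} (R : Subgroup (FreeGroup α)) [R.Normal]
    (s : Set (FreeGroup α)) (hs : s ⊆ (R : Set (FreeGroup α)))
    [Module (MonoidAlgebra ℤ (FreeGroup α ⧸ R)) (Additive (Abelianization ↥R))]
    (hact : ∀ (f : FreeGroup α) (r r' : ↥R), (r' : FreeGroup α) = f * ↑r * f⁻¹ →
      MonoidAlgebra.of ℤ (FreeGroup α ⧸ R) (QuotientGroup.mk f) •
        Additive.ofMul (Abelianization.of r) = Additive.ofMul (Abelianization.of r'))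
    (hgen : Submodule.span (MonoidAlgebra ℤ (FreeGroup α ⧸ R))
        {m : Additive (Abelianization ↥R) | ∃ w : ↥R, (w : FreeGroup α) ∈ s ∧
          m = Additive.ofMul (Abelianization.of w)} = ⊤)
    (φ : (FreeGroup α ⧸ Subgroup.normalClosure s) →* FreeGroup α ⧸ R)
    (hφ : ∀ w : FreeGroup α, φ (QuotientGroup.mk w) = QuotientGroup.mk w) :
    commutator ↥φ.ker = ⊤ :=
  (kernel_of_natural_epimorphism_is_perfect_general hact hgen hφ).commutator_eq_top
end
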